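/- arXiv:1802.08964 — 5 statements merged into one kernel-verified Lean document; each statement's English description precedes it below -/
import Mathlib

section
/- Let Q, N ≥ 1 be real numbers and let (a_n)_{n∈ℤ[i]} be any sequence of complex numbers. Then for every ε > 0 there is a constant C(ε) > 0, depending only on ε, such that ∑_{q∈ℤ[i]\{0}, N(q)≤Q} ∑_{r mod q², (r,q)=1} |∑_{n∈ℤ[i], N(n)≤N} a_n · e(Re(n r / q²))|² ≤ C(ε) · (QN)^ε · (Q³ + Q²√N + √Q · N) · ∑_{n∈ℤ[i], N(n)≤N} |a_n|². -/
noncomputable section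

/-- `e(t) = exp(2πit)`. -/
def e (t : ℝ) : ℂ := Complex.exp (2 * Real.pi * Complex.I * t)

/-- The norm of a Gaussian integer, as a real number. -/
def gN (z : GaussianInt) : ℝ := (z.re : ℝ) ^ 2 + (z.im : ℝ) ^ 2

/-!
Fix a dyadic range `Q / 2 < N(q) ≤ Q` and let `M ≍ √N`. Rounding the fractions `r / q²` to the grid
`M⁻¹ℤ[i]` perturbs the exponential sums only by a factor whose Taylor series is harmless, so
Plancherel's identity on `(ℤ/M)²` bounds the sum over these `q` by `≪ K M² ∑ |a_n|²`, where `K` is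
the largest number of fractions within `δ = 2 / M` of a single one `r₀ / q₀²`, modulo `ℤ[i]`.

A given `q` carries `≪ 1 + (Qδ)²` fractions that close. If it carries any, then `q² r₀` is within
`Q² δ` of `0` modulo `q₀²`; hence the differences `x² - y²` of squares of such `q` take
`≪ (1 + Q² δ)²` values. By the divisor bound each nonzero value factors as `(x - y)(x + y)` in
`≪ Q^ε` ways, so there are only `≪ Q^ε (1 + Q² δ)` such `q`. Together with the trivial bound `≪ Q`
on their number this gives `K ≪ Q^ε (1 + Q² δ + Q³ δ²)`.
-/

section Fibers

variable {κ G : Type*} [DecidableEq G] {J : Finset κ} {p : κ → G} {K : ℝ}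

lemma sum_comp_le_mul_sum_image {F : G → ℝ} (hF : ∀ g, 0 ≤ F g)
    (h : ∀ i ∈ J, ({j ∈ J | p j = p i}.card : ℝ) ≤ K) :
    ∑ j ∈ J, F (p j) ≤ K * ∑ g ∈ J.image p, F g := by
  simp only [Finset.sum_comp F p, nsmul_eq_mul, Finset.mul_sum]
  refine Finset.sum_le_sum fun g hg ↦ mul_le_mul_of_nonneg_right ?_ (hF g)
  obtain ⟨i, hi, rfl⟩ := Finset.mem_image.mp hg
  exact h i hi

lemma card_le_mul_card_image_of_card_fiber_le
    (h : ∀ i ∈ J, ({j ∈ J | p j = p i}.card : ℝ) ≤ K) : (J.card : ℝ) ≤ K * (J.image p).card := by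
  simpa using sum_comp_le_mul_sum_image (F := 1) (fun _ ↦ zero_le_one) h

end Fibers

section Perturbation

lemma sqrt_sum_norm_sq_le_of_hasSum {κ E : Type*} [SeminormedAddCommGroup E] (J : Finset κ)
    {x : ℕ → κ → E} {y : κ → E} {w : ℕ → ℝ} {W : ℝ} (hx : ∀ j ∈ J, HasSum (x · j) (y j))
    (hw : HasSum w W) (h : ∀ k, √(∑ j ∈ J, ‖x k j‖ ^ 2) ≤ w k) :
    √(∑ j ∈ J, ‖y j‖ ^ 2) ≤ W := by
  let v (u : κ → E) : PiLp 2 fun _ : J ↦ E := (WithLp.addEquiv 2 (J → E)).symm fun j ↦ u j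
  have hv (u : κ → E) : ‖v u‖ = √(∑ j ∈ J, ‖u j‖ ^ 2) :=
    (PiLp.norm_eq_of_L2 _).trans (congrArg _ (Finset.sum_coe_sort J fun j ↦ ‖u j‖ ^ 2))
  have hsum : HasSum (fun k ↦ v (x k)) (v y) :=
    (Pi.hasSum.mpr fun j : J ↦ hx j j.2).map (WithLp.addEquiv 2 (J → E)).symm
      (PiLp.continuous_toLp 2 _)
  rw [← hv]
  exact hsum.norm_le_of_bounded hw fun k ↦ (hv (x k)).trans_le (h k)

-- Expanding the exponential separates `j` from `n`; the `k`-th term of the series is at most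
-- `(β * T) ^ k / k! * √D` in `ℓ²(J)`.
theorem sum_norm_sq_sum_mul_exp_le {ι κ : Type*} (J : Finset κ) (S : Finset ι)
    (f : κ → ι → ℂ) (b : κ → ℂ) (t : ι → ℂ) {β T D : ℝ} (hβ : 0 ≤ β) (hT : 0 ≤ T)
    (hb : ∀ j ∈ J, ‖b j‖ ≤ β)
    (h : ∀ k : ℕ, ∑ j ∈ J, ‖∑ n ∈ S, f j n * t n ^ k‖ ^ 2 ≤ (T ^ k) ^ 2 * D) :
    ∑ j ∈ J, ‖∑ n ∈ S, f j n * Complex.exp (b j * t n)‖ ^ 2 ≤ Real.exp (β * T) ^ 2 * D := by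
  have hD : 0 ≤ D := by
    simpa using (Finset.sum_nonneg fun j _ ↦ sq_nonneg _).trans (h 0)
  have hexpand (j : κ) : HasSum
      (fun k : ℕ ↦ b j ^ k / (k.factorial : ℂ) * ∑ n ∈ S, f j n * t n ^ k)
      (∑ n ∈ S, f j n * Complex.exp (b j * t n)) := by
    simp_rw [Finset.mul_sum, Complex.exp_eq_exp_ℂ]
    refine hasSum_sum fun n _ ↦ ?_
    exact ((NormedSpace.expSeries_div_hasSum_exp (b j * t n)).mul_left (f j n)).congr_fun
      fun k ↦ by ring
  have hterm (k : ℕ) : √(∑ j ∈ J, ‖b j ^ k / (k.factorial : ℂ) * ∑ n ∈ S, f j n * t n ^ k‖ ^ 2)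
      ≤ (β * T) ^ k / k.factorial * √D := by
    rw [Real.sqrt_le_left (by positivity), mul_pow, Real.sq_sqrt hD]
    calc ∑ j ∈ J, ‖b j ^ k / (k.factorial : ℂ) * ∑ n ∈ S, f j n * t n ^ k‖ ^ 2
        ≤ ∑ j ∈ J, (β ^ k / k.factorial) ^ 2 * ‖∑ n ∈ S, f j n * t n ^ k‖ ^ 2 := by
          refine Finset.sum_le_sum fun j hj ↦ ?_
          rw [norm_mul, mul_pow, norm_div, norm_pow, Complex.norm_natCast]
          gcongr
          exact hb j hj
      _ ≤ (β ^ k / k.factorial) ^ 2 * ((T ^ k) ^ 2 * D) := by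
          rw [← Finset.mul_sum]
          gcongr
          exact h k
      _ = ((β * T) ^ k / k.factorial) ^ 2 * D := by ring
  have hexp : HasSum (fun k : ℕ ↦ (β * T) ^ k / k.factorial * √D) (Real.exp (β * T) * √D) := by
    rw [Real.exp_eq_exp_ℝ]
    exact (NormedSpace.expSeries_div_hasSum_exp (β * T)).mul_right _
  have hsqrt := sqrt_sum_norm_sq_le_of_hasSum J (fun j _ ↦ hexpand j) hexp hterm
  rwa [Real.sqrt_le_left (by positivity), mul_pow, Real.sq_sqrt hD] at hsqrt

end Perturbation

section Plancherel

open scoped ComplexConjugate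

theorem sum_norm_sq_sum_mul_addChar {ι G : Type*} [AddCommGroup G] [Fintype G] {S : Finset ι}
    {χ : ι → AddChar G ℂ} (hχ : Set.InjOn χ S) (b : ι → ℂ) :
    ∑ g, ‖∑ n ∈ S, b n * χ n g‖ ^ 2 = Fintype.card G * ∑ n ∈ S, ‖b n‖ ^ 2 := by
  classical
  have horth {n m : ι} (hn : n ∈ S) (hm : m ∈ S) :
      ∑ g, χ n g * conj (χ m g) = if n = m then (Fintype.card G : ℂ) else 0 := by
    have := AddChar.sum_eq_ite (χ n - χ m)
    simp_rw [sub_eq_zero, hχ.eq_iff hn hm] at this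
    rw [← this]
    refine Finset.sum_congr rfl fun g _ ↦ ?_
    rw [AddChar.sub_apply, ← AddChar.map_neg_eq_conj]
  have key : ((∑ g, ‖∑ n ∈ S, b n * χ n g‖ ^ 2 : ℝ) : ℂ)
      = ((Fintype.card G * ∑ n ∈ S, ‖b n‖ ^ 2 : ℝ) : ℂ) := by
    push_cast
    calc ∑ g, (‖∑ n ∈ S, b n * χ n g‖ : ℂ) ^ 2
        = ∑ g, ∑ n ∈ S, ∑ m ∈ S, b n * conj (b m) * (χ n g * conj (χ m g)) := by
          refine Finset.sum_congr rfl fun g _ ↦ ?_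
          rw [← Complex.mul_conj', map_sum, Finset.sum_mul_sum]
          simp only [map_mul, mul_mul_mul_comm]
      _ = ∑ n ∈ S, ∑ m ∈ S, b n * conj (b m) * ∑ g, χ n g * conj (χ m g) := by
          rw [Finset.sum_comm]
          simp only [Finset.sum_comm (s := Finset.univ), ← Finset.mul_sum]
      _ = ∑ n ∈ S, b n * conj (b n) * Fintype.card G := by
          refine Finset.sum_congr rfl fun n hn ↦ ?_
          rw [Finset.sum_congr rfl fun m hm ↦ by rw [horth hn hm]]
          simp [hn]
      _ = Fintype.card G * ∑ n ∈ S, (‖b n‖ : ℂ) ^ 2 := by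
          simp only [Complex.mul_conj', Finset.mul_sum, mul_comm]
  exact_mod_cast key

end Plancherel

section LargeSieve

lemma e_intCast_div {M : ℕ} [NeZero M] (k : ℤ) : e (k / M) = ZMod.stdAddChar (k : ZMod M) := by
  rw [ZMod.stdAddChar_coe, e]
  push_cast
  ring_nf

/-- The trigonometric sum `∑ a(n) e(Re(nα))` over `n ∈ S`. -/
def expSum (S : Finset GaussianInt) (a : GaussianInt → ℂ) (α : ℂ) : ℂ :=
  ∑ n ∈ S, a n * e ((n : ℂ) * α).re

/-- `α` and `β` are at distance at most `δ` modulo the lattice `ℤ[i]`. -/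
def NearMod (δ : ℝ) (α β : ℂ) : Prop :=
  ∃ z : GaussianInt, ‖α - β - (z : ℂ)‖ ≤ δ

instance (δ : ℝ) (α β : ℂ) : Decidable (NearMod δ α β) :=
  Classical.propDecidable _

/-- The index, modulo `ℤ[i]`, of a point of the grid `M⁻¹ℤ[i]` nearest to `α`. -/
def gridIndex (M : ℕ) (α : ℂ) : ZMod M × ZMod M :=
  (round (M * α.re), round (M * α.im))

/-- The character `α ↦ e(Re(nα))` of `M⁻¹ℤ[i] / ℤ[i]`, on the indices of `gridIndex`. -/
def gridChar (M : ℕ) [NeZero M] (n : GaussianInt) : AddChar (ZMod M × ZMod M) ℂ :=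
  (ZMod.stdAddChar.mulShift (n.re : ZMod M)).compAddMonoidHom (AddMonoidHom.fst _ _) *
    (ZMod.stdAddChar.mulShift (-n.im : ZMod M)).compAddMonoidHom (AddMonoidHom.snd _ _)

lemma gridChar_apply {M : ℕ} [NeZero M] (n : GaussianInt) (p : ZMod M × ZMod M) :
    gridChar M n p = ZMod.stdAddChar ((n.re : ZMod M) * p.1 - (n.im : ZMod M) * p.2) := by
  simp [gridChar, AddChar.mulShift_apply, ← AddChar.map_add_eq_mul, sub_eq_add_neg]

lemma gridChar_injOn (L : ℕ) :
    Set.InjOn (gridChar (2 * L + 1)) {n | |n.re| ≤ L ∧ |n.im| ≤ L} := by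
  rintro n ⟨hn_re, hn_im⟩ m ⟨hm_re, hm_im⟩ hnm
  have hinj {x y : ℤ} (hx : |x| ≤ L) (hy : |y| ≤ L)
      (hxy : (x : ZMod (2 * L + 1)) = y) : x = y := by
    rw [ZMod.intCast_eq_intCast_iff_dvd_sub] at hxy
    have := Int.eq_zero_of_abs_lt_dvd hxy (by push_cast; grind)
    lia
  have happly (p : ZMod (2 * L + 1) × ZMod (2 * L + 1)) :
      (n.re * p.1 - n.im * p.2 : ZMod (2 * L + 1)) = m.re * p.1 - m.im * p.2 := by
    apply ZMod.injective_stdAddChar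
    rw [← gridChar_apply, ← gridChar_apply, hnm]
  exact Zsqrtd.ext (hinj hn_re hm_re (by simpa using happly (1, 0)))
    (hinj hn_im hm_im (by simpa using happly (0, 1)))

/-- The signed distance from `x` to the nearest point of `M⁻¹ℤ`. -/
def gridOffset (M : ℕ) (x : ℝ) : ℝ :=
  x - round (M * x) / M

lemma abs_gridOffset_le {M : ℕ} [NeZero M] (x : ℝ) : |gridOffset M x| ≤ 1 / (2 * M) := by
  have hM : (0 : ℝ) < M := Nat.cast_pos.mpr (NeZero.pos M)
  calc |gridOffset M x| = |M * x - round (M * x)| / M := by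
        rw [gridOffset, ← abs_of_pos hM, ← abs_div, abs_of_pos hM]
        congr 1
        field_simp
    _ ≤ 1 / 2 / M := by gcongr; exact abs_sub_round _
    _ = 1 / (2 * M) := by ring

lemma nearMod_of_gridIndex_eq {M : ℕ} [NeZero M] {α β : ℂ}
    (h : gridIndex M α = gridIndex M β) : NearMod (2 / M) α β := by
  have hM : (M : ℝ) ≠ 0 := Nat.cast_ne_zero.mpr (NeZero.ne M)
  have hcoord {x y : ℝ} (hxy : (round (M * x) : ZMod M) = round (M * y)) :
      ∃ z : ℤ, |x - y - z| ≤ 1 / M := by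
    obtain ⟨z, hz⟩ := (ZMod.intCast_eq_intCast_iff_dvd_sub _ _ _).mp hxy.symm
    refine ⟨z, ?_⟩
    have hz' : (round (M * x) : ℝ) / M - round (M * y) / M = z := by
      rw [div_sub_div_same, div_eq_iff hM]
      exact_mod_cast hz.trans (mul_comm _ _)
    calc |x - y - z| = |gridOffset M x - gridOffset M y| := by
          rw [← hz', gridOffset, gridOffset]; ring_nf
      _ ≤ 1 / (2 * M) + 1 / (2 * M) := (abs_sub _ _).trans
          (add_le_add (abs_gridOffset_le x) (abs_gridOffset_le y))
      _ = 1 / M := by ring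
  obtain ⟨z, hz⟩ := hcoord (Prod.ext_iff.mp h).1
  obtain ⟨w, hw⟩ := hcoord (Prod.ext_iff.mp h).2
  refine ⟨⟨z, w⟩, (Complex.norm_le_abs_re_add_abs_im _).trans ?_⟩
  simp only [Complex.sub_re, Complex.sub_im, GaussianInt.re_toComplex, GaussianInt.im_toComplex]
  exact (add_le_add hz hw).trans_eq (by ring)

lemma e_re_mul_eq {M : ℕ} [NeZero M] (n : GaussianInt) (α : ℂ) :
    e ((n : ℂ) * α).re = gridChar M n (gridIndex M α) *
      Complex.exp (-(2 * Real.pi * gridOffset M α.im * Complex.I) * n.im) *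
      Complex.exp (2 * Real.pi * gridOffset M α.re * Complex.I * n.re) := by
  have hgrid : gridChar M n (gridIndex M α)
      = e (((n.re * round (M * α.re) - n.im * round (M * α.im) : ℤ) : ℝ) / M) := by
    rw [e_intCast_div, gridChar_apply, gridIndex]
    push_cast
    rfl
  rw [hgrid, e, e, ← Complex.exp_add, ← Complex.exp_add]
  congr 1
  simp only [Complex.mul_re, ← GaussianInt.intCast_re, ← GaussianInt.intCast_im, gridOffset]
  push_cast
  ring

section

variable {κ : Type*} {J : Finset κ} {S : Finset GaussianInt} {L : ℕ} {α : κ → ℂ} {K : ℝ}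
  (hS : ∀ n ∈ S, |n.re| ≤ L ∧ |n.im| ≤ L) (hK : 0 ≤ K)
  (h : ∀ i ∈ J, ({j ∈ J | NearMod (2 / (2 * L + 1 : ℕ)) (α j) (α i)}.card : ℝ) ≤ K)
  (a : GaussianInt → ℂ)
include hS hK h

lemma sum_norm_sum_gridChar_sq_le :
    ∑ j ∈ J, ‖∑ n ∈ S, a n * gridChar (2 * L + 1) n (gridIndex (2 * L + 1) (α j))‖ ^ 2
      ≤ K * (2 * L + 1) ^ 2 * ∑ n ∈ S, ‖a n‖ ^ 2 := by
  calc ∑ j ∈ J, ‖∑ n ∈ S, a n * gridChar (2 * L + 1) n (gridIndex (2 * L + 1) (α j))‖ ^ 2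
      ≤ K * ∑ p, ‖∑ n ∈ S, a n * gridChar (2 * L + 1) n p‖ ^ 2 := by
        have hF (p) : 0 ≤ ‖∑ n ∈ S, a n * gridChar (2 * L + 1) n p‖ ^ 2 := sq_nonneg _
        refine (sum_comp_le_mul_sum_image hF fun i hi ↦ le_trans ?_ (h i hi)).trans
          (mul_le_mul_of_nonneg_left (Finset.sum_le_univ_sum_of_nonneg hF) hK)
        gcongr with j
        exact nearMod_of_gridIndex_eq
    _ = K * (2 * L + 1) ^ 2 * ∑ n ∈ S, ‖a n‖ ^ 2 := by
        rw [sum_norm_sq_sum_mul_addChar ((gridChar_injOn L).mono hS), Fintype.card_prod, ZMod.card]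
        push_cast
        ring

lemma sum_norm_sum_gridChar_mul_pow_sq_le (k l : ℕ) :
    ∑ j ∈ J, ‖∑ n ∈ S, a n * gridChar (2 * L + 1) n (gridIndex (2 * L + 1) (α j))
        * n.re ^ k * n.im ^ l‖ ^ 2
      ≤ ((L : ℝ) ^ l) ^ 2 * (((L : ℝ) ^ k) ^ 2 *
          (K * (2 * L + 1) ^ 2 * ∑ n ∈ S, ‖a n‖ ^ 2)) := by
  have hcoeff : ∑ n ∈ S, ‖a n * n.re ^ k * n.im ^ l‖ ^ 2
      ≤ ((L : ℝ) ^ l) ^ 2 * ((L : ℝ) ^ k) ^ 2 * ∑ n ∈ S, ‖a n‖ ^ 2 := by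
    rw [Finset.mul_sum]
    refine Finset.sum_le_sum fun n hn ↦ ?_
    have hre : |(n.re : ℝ)| ≤ L := by exact_mod_cast (hS n hn).1
    have him : |(n.im : ℝ)| ≤ L := by exact_mod_cast (hS n hn).2
    rw [norm_mul, norm_mul, norm_pow, norm_pow, Complex.norm_intCast, Complex.norm_intCast,
      mul_pow, mul_pow, mul_comm, ← mul_assoc, mul_right_comm]
    gcongr
  have hmain := sum_norm_sum_gridChar_sq_le hS hK h fun n ↦ a n * n.re ^ k * n.im ^ l
  grw [hcoeff] at hmain
  refine (le_of_eq ?_).trans (hmain.trans_eq (by ring))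
  exact Finset.sum_congr rfl fun j _ ↦ congrArg (‖·‖ ^ 2) (Finset.sum_congr rfl fun n _ ↦ by ring)

theorem sum_norm_expSum_sq_le :
    ∑ j ∈ J, ‖expSum S a (α j)‖ ^ 2
      ≤ Real.exp (2 * Real.pi) * (K * (2 * L + 1) ^ 2 * ∑ n ∈ S, ‖a n‖ ^ 2) := by
  set D := K * (2 * L + 1) ^ 2 * ∑ n ∈ S, ‖a n‖ ^ 2
  set β := Real.pi / (2 * L + 1 : ℕ) with hβ
  have hβ0 : 0 ≤ β := by positivity
  have hβL : β * L ≤ Real.pi / 2 := by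
    rw [hβ, div_mul_eq_mul_div, div_le_div_iff₀ (by positivity) two_pos]
    push_cast
    nlinarith [Real.pi_pos]
  have hfreq (x : ℝ) : ‖(2 * Real.pi * gridOffset (2 * L + 1) x * Complex.I : ℂ)‖ ≤ β := by
    simp only [norm_mul, Complex.norm_I, Complex.norm_real, Complex.norm_ofNat, mul_one,
      Real.norm_eq_abs, abs_of_pos Real.pi_pos]
    grw [abs_gridOffset_le]
    exact Eq.le (by ring)
  have him (k : ℕ) := sum_norm_sq_sum_mul_exp_le J S
    (fun j n ↦ a n * gridChar (2 * L + 1) n (gridIndex (2 * L + 1) (α j)) * n.re ^ k)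
    (fun j ↦ -(2 * Real.pi * gridOffset (2 * L + 1) (α j).im * Complex.I)) (fun n ↦ (n.im : ℂ))
    hβ0 L.cast_nonneg (fun j _ ↦ (norm_neg _).trans_le (hfreq _))
    (sum_norm_sum_gridChar_mul_pow_sq_le hS hK h a k)
  simp only [mul_right_comm _ (_ ^ _) (Complex.exp _)] at him
  have hre := sum_norm_sq_sum_mul_exp_le J S _
    (fun j ↦ 2 * Real.pi * gridOffset (2 * L + 1) (α j).re * Complex.I) (fun n ↦ (n.re : ℂ))
    hβ0 L.cast_nonneg (fun j _ ↦ hfreq _)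
    (fun k ↦ (him k).trans_eq (mul_left_comm _ _ _))
  calc ∑ j ∈ J, ‖expSum S a (α j)‖ ^ 2
      ≤ Real.exp (β * L) ^ 2 * (Real.exp (β * L) ^ 2 * D) := by
        refine (le_of_eq ?_).trans hre
        simp only [expSum, e_re_mul_eq (M := 2 * L + 1), ← mul_assoc]
    _ = Real.exp (4 * (β * L)) * D := by
        rw [← mul_assoc, ← Real.exp_nat_mul, ← Real.exp_add]
        ring_nf
    _ ≤ Real.exp (2 * Real.pi) * D := by
        gcongr Real.exp ?_ * D
        linarith

end

end LargeSieve

section GaussianNorm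

lemma gN_eq_norm_sq (z : GaussianInt) : gN z = ‖(z : ℂ)‖ ^ 2 := by
  rw [← Complex.normSq_eq_norm_sq, Complex.normSq_apply, ← GaussianInt.intCast_re,
    ← GaussianInt.intCast_im, gN]
  ring

lemma gN_eq_intCast_norm (z : GaussianInt) : gN z = z.norm := by
  rw [gN_eq_norm_sq, GaussianInt.intCast_real_norm, Complex.normSq_eq_norm_sq]

lemma norm_toComplex_sq (z : GaussianInt) : ‖(z : ℂ) ^ 2‖ = gN z := by
  rw [norm_pow, gN_eq_norm_sq]

/-- The norm `gN` as a monoid homomorphism. -/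
def gNHom : GaussianInt →* ℝ where
  toFun := gN
  map_one' := by simp [gN]
  map_mul' z w := by simp only [gN_eq_norm_sq, map_mul, norm_mul, mul_pow]

lemma gN_nonneg (z : GaussianInt) : 0 ≤ gN z := by
  rw [gN_eq_norm_sq]
  positivity

lemma gN_eq_one_of_isUnit {z : GaussianInt} (hz : IsUnit z) : gN z = 1 := by
  rw [gN_eq_intCast_norm, (Zsqrtd.norm_eq_one_iff' (by norm_num) z).mpr hz, Int.cast_one]

lemma one_le_gN {z : GaussianInt} (hz : z ≠ 0) : 1 ≤ gN z := by
  rw [gN_eq_intCast_norm]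
  exact_mod_cast GaussianInt.norm_pos.mpr hz

lemma two_le_gN_of_prime {p : GaussianInt} (hp : Prime p) : 2 ≤ gN p := by
  have hne : p.norm ≠ 1 := fun h ↦
    hp.not_isUnit ((Zsqrtd.norm_eq_one_iff' (by norm_num) p).mp h)
  have hpos := GaussianInt.norm_pos.mpr hp.ne_zero
  rw [gN_eq_intCast_norm]
  exact_mod_cast (show 2 ≤ p.norm by lia)

/-- The Gaussian integers in the square with centre `c` and side length `2R`. -/
def latticeBox (c : ℂ) (R : ℝ) : Finset GaussianInt :=
  (Finset.Icc ⌈c.re - R⌉ ⌊c.re + R⌋ ×ˢ Finset.Icc ⌈c.im - R⌉ ⌊c.im + R⌋).image fun p ↦ ⟨p.1, p.2⟩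

lemma mem_latticeBox {c : ℂ} {R : ℝ} {z : GaussianInt} (hz : ‖(z : ℂ) - c‖ ≤ R) :
    z ∈ latticeBox c R := by
  have hre := abs_le.mp ((Complex.abs_re_le_norm _).trans hz)
  have him := abs_le.mp ((Complex.abs_im_le_norm _).trans hz)
  simp only [Complex.sub_re, Complex.sub_im, ← GaussianInt.intCast_re,
    ← GaussianInt.intCast_im] at hre him
  refine Finset.mem_image.mpr ⟨(z.re, z.im), ?_, rfl⟩
  simp only [Finset.mem_product, Finset.mem_Icc, Int.ceil_le, Int.le_floor]
  constructor <;> constructor <;> linarith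

lemma card_latticeBox_le (c : ℂ) {R : ℝ} (hR : 0 ≤ R) :
    ((latticeBox c R).card : ℝ) ≤ (2 * R + 1) ^ 2 := by
  have hcard (x : ℝ) : ((Finset.Icc ⌈x - R⌉ ⌊x + R⌋).card : ℝ) ≤ 2 * R + 1 := by
    have hle : ⌈x - R⌉ ≤ ⌊x + R⌋ + 1 :=
      Int.ceil_le.mpr (by push_cast; linarith [Int.lt_floor_add_one (x + R)])
    have hcast : ((Finset.Icc ⌈x - R⌉ ⌊x + R⌋).card : ℝ) = ⌊x + R⌋ + 1 - ⌈x - R⌉ := by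
      exact_mod_cast Int.card_Icc_of_le _ _ hle
    linarith [Int.floor_le (x + R), Int.le_ceil (x - R)]
  calc ((latticeBox c R).card : ℝ)
      ≤ ((Finset.Icc ⌈c.re - R⌉ ⌊c.re + R⌋).card : ℝ)
          * (Finset.Icc ⌈c.im - R⌉ ⌊c.im + R⌋).card := by
        exact_mod_cast Finset.card_image_le.trans_eq (Finset.card_product _ _)
    _ ≤ (2 * R + 1) ^ 2 := by
        rw [sq]
        gcongr <;> exact hcard _

lemma card_le_of_forall_norm_sub_le {T : Finset GaussianInt} {c : ℂ} {R : ℝ} (hR : 0 ≤ R)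
    (h : ∀ z ∈ T, ‖(z : ℂ) - c‖ ≤ R) : (T.card : ℝ) ≤ (2 * R + 1) ^ 2 :=
  (Nat.cast_le.mpr (Finset.card_le_card fun z hz ↦ mem_latticeBox (h z hz))).trans
    (card_latticeBox_le c hR)

lemma finite_setOf_gN_le (B : ℝ) : {z : GaussianInt | gN z ≤ B}.Finite := by
  refine (latticeBox 0 √B).finite_toSet.subset fun z hz ↦ mem_latticeBox ?_
  rw [sub_zero]
  exact Real.le_sqrt_of_sq_le (gN_eq_norm_sq z ▸ hz)

instance : Finite GaussianIntˣ :=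
  have : Finite {z : GaussianInt | gN z ≤ 1} := (finite_setOf_gN_le 1).to_subtype
  .of_injective (fun u : GaussianIntˣ ↦
    (⟨u, (gN_eq_one_of_isUnit u.isUnit).le⟩ : {z : GaussianInt | gN z ≤ 1}))
    fun _ _ h ↦ Units.ext (congrArg Subtype.val h)

lemma finite_quotient_span_singleton {q : GaussianInt} (hq : q ≠ 0) :
    Finite (GaussianInt ⧸ Ideal.span {q}) := by
  have : Finite {z : GaussianInt | gN z ≤ gN q} := (finite_setOf_gN_le _).to_subtype
  refine .of_surjective
    (fun z : {z : GaussianInt | gN z ≤ gN q} ↦ Ideal.Quotient.mk (Ideal.span {q}) z) fun x ↦ ?_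
  obtain ⟨y, rfl⟩ := Ideal.Quotient.mk_surjective x
  have hmem : gN (y % q) ≤ gN q := by
    rw [gN_eq_intCast_norm, gN_eq_intCast_norm]
    exact_mod_cast (GaussianInt.norm_mod_lt y hq).le
  refine ⟨⟨y % q, hmem⟩, ?_⟩
  rw [Ideal.Quotient.eq, Ideal.mem_span_singleton]
  exact ⟨-(y / q), by simp only [GaussianInt.mod_def]; ring⟩

end GaussianNorm

section DivisorBound

lemma natCast_add_one_le_rpow {x ε : ℝ} (hx : 0 ≤ x) (hxε : 2 ≤ x ^ ε) (k : ℕ) :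
    (k + 1 : ℝ) ≤ (x ^ k) ^ ε := by
  calc (k + 1 : ℝ) ≤ 2 ^ k := by exact_mod_cast Nat.lt_two_pow_self (n := k)
    _ ≤ (x ^ ε) ^ k := by gcongr
    _ = (x ^ k) ^ ε := Real.rpow_pow_comm hx ε k

lemma natCast_add_one_le_mul_rpow {x ε : ℝ} (hx : 2 ≤ x) (hε : 0 < ε) (k : ℕ) :
    (k + 1 : ℝ) ≤ (1 + 1 / (ε * Real.log 2)) * (x ^ k) ^ ε := by
  have : 0 < ε * Real.log 2 := mul_pos hε (Real.log_pos one_lt_two)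
  have hpow : 1 + k * (ε * Real.log 2) ≤ (x ^ k) ^ ε := by
    calc 1 + k * (ε * Real.log 2) ≤ Real.exp (k * (ε * Real.log 2)) := by
          rw [add_comm]
          exact Real.add_one_le_exp _
      _ = (2 ^ k : ℝ) ^ ε := by
          rw [Real.rpow_def_of_pos (by positivity), Real.log_pow]
          ring_nf
      _ ≤ (x ^ k) ^ ε := by gcongr
  calc (k + 1 : ℝ) ≤ k + 1 + (k * (ε * Real.log 2) + 1 / (ε * Real.log 2)) := by
        have : 0 ≤ k * (ε * Real.log 2) + 1 / (ε * Real.log 2) := by positivity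
        linarith
    _ = (1 + 1 / (ε * Real.log 2)) * (1 + k * (ε * Real.log 2)) := by
        field_simp
        ring
    _ ≤ (1 + 1 / (ε * Real.log 2)) * (x ^ k) ^ ε := by gcongr

lemma natCast_add_one_le_ite_mul_rpow {x ε : ℝ} (hx : 2 ≤ x) (hε : 0 < ε) (k : ℕ) :
    (k + 1 : ℝ) ≤ (if x ≤ 2 ^ (1 / ε) then 1 + 1 / (ε * Real.log 2) else 1) * (x ^ k) ^ ε := by
  have hx0 : 0 ≤ x := zero_le_two.trans hx
  split_ifs with hxε
  · exact natCast_add_one_le_mul_rpow hx hε k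
  · rw [not_le, one_div, Real.rpow_inv_lt_iff_of_pos zero_le_two hx0 hε] at hxε
    rw [one_mul]
    exact natCast_add_one_le_rpow hx0 hxε.le k

open UniqueFactorizationMonoid

variable {R : Type*} [CommMonoidWithZero R] [UniqueFactorizationMonoid R]

lemma card_le_card_units_mul_prod_count [NormalizationMonoid R] [DecidableEq R] [Finite Rˣ]
    {m : R} (hm : m ≠ 0) {T : Finset R} (hT : ∀ d ∈ T, d ∣ m) :
    T.card ≤ Nat.card Rˣ *
      ∏ p ∈ (normalizedFactors m).toFinset, ((normalizedFactors m).count p + 1) := by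
  have := Fintype.ofFinite Rˣ
  have hsub : T ⊆ (Finset.univ ×ˢ Finset.Iic (normalizedFactors m)).image
      fun x : Rˣ × Multiset R ↦ x.2.prod * x.1 := by
    intro d hd
    have hd0 : d ≠ 0 := ne_zero_of_dvd_ne_zero hm (hT d hd)
    obtain ⟨u, hu⟩ := prod_normalizedFactors hd0
    refine Finset.mem_image.mpr ⟨(u, normalizedFactors d), ?_, hu⟩
    simpa using (dvd_iff_normalizedFactors_le_normalizedFactors hd0 hm).mp (hT d hd)
  calc T.card ≤ Fintype.card Rˣ * (Finset.Iic (normalizedFactors m)).card :=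
        (Finset.card_le_card hsub).trans (Finset.card_image_le.trans_eq (Finset.card_product _ _))
    _ = _ := by rw [Nat.card_eq_fintype_card, Multiset.card_Iic]

lemma map_eq_prod_pow_count [NormalizationMonoid R] [DecidableEq R] {M : Type*} [CommMonoid M]
    {ν : R →* M} (hunit : ∀ u, IsUnit u → ν u = 1) {m : R} (hm : m ≠ 0) :
    ν m = ∏ p ∈ (normalizedFactors m).toFinset, ν p ^ (normalizedFactors m).count p := by
  obtain ⟨u, hu⟩ := prod_normalizedFactors hm
  calc ν m = ν (normalizedFactors m).prod := by
        conv_lhs => rw [← hu, map_mul, hunit _ u.isUnit, mul_one]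
    _ = _ := by
        rw [Finset.prod_multiset_count, map_prod]
        simp only [map_pow]

-- Only the finitely many primes `p` with `ν p < 2 ^ (1 / ε)` contribute a factor exceeding the
-- corresponding factor of `ν m ^ ε`.
theorem exists_card_divisors_le_mul_rpow [Finite Rˣ] {ν : R →* ℝ}
    (hunit : ∀ u, IsUnit u → ν u = 1) (hprime : ∀ p, Prime p → 2 ≤ ν p)
    (hfin : ∀ B, {p | Prime p ∧ ν p ≤ B}.Finite) {ε : ℝ} (hε : 0 < ε) :
    ∃ C > 0, ∀ m ≠ 0, ∀ T : Finset R, (∀ d ∈ T, d ∣ m) → (T.card : ℝ) ≤ C * ν m ^ ε := by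
  classical
  let _ := (UniqueFactorizationMonoid.strongNormalizationMonoid (α := R)).toNormalizationMonoid
  set V := (hfin (2 ^ (1 / ε))).toFinset
  set C₁ := 1 + 1 / (ε * Real.log 2)
  have : 0 < ε * Real.log 2 := mul_pos hε (Real.log_pos one_lt_two)
  have hone : 1 ≤ C₁ := le_add_of_nonneg_right (by positivity)
  refine ⟨Nat.card Rˣ * C₁ ^ V.card, by have := Nat.card_pos (α := Rˣ); positivity,
    fun m hm T hT ↦ ?_⟩
  set s := normalizedFactors m
  have hs {p : R} (hp : p ∈ s.toFinset) : Prime p :=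
    prime_of_normalized_factor p (Multiset.mem_toFinset.mp hp)
  have hν {p : R} (hp : p ∈ s.toFinset) : 0 ≤ ν p := zero_le_two.trans (hprime p (hs hp))
  have hνm : 0 ≤ ν m := by
    rw [map_eq_prod_pow_count hunit hm]
    exact Finset.prod_nonneg fun p hp ↦ pow_nonneg (hν hp) _
  have hprod : ∏ p ∈ s.toFinset, (s.count p + 1 : ℝ) ≤ C₁ ^ V.card * ν m ^ ε := by
    calc ∏ p ∈ s.toFinset, (s.count p + 1 : ℝ)
        ≤ ∏ p ∈ s.toFinset, (if ν p ≤ 2 ^ (1 / ε) then C₁ else 1) * (ν p ^ s.count p) ^ ε :=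
          Finset.prod_le_prod (fun p _ ↦ by positivity) fun p hp ↦
            natCast_add_one_le_ite_mul_rpow (hprime p (hs hp)) hε _
      _ = C₁ ^ {p ∈ s.toFinset | ν p ≤ 2 ^ (1 / ε)}.card * ν m ^ ε := by
          rw [Finset.prod_mul_distrib, Real.finsetProd_rpow _ _ fun p hp ↦ pow_nonneg (hν hp) _,
            ← map_eq_prod_pow_count hunit hm, ← Finset.prod_filter, Finset.prod_const]
      _ ≤ C₁ ^ V.card * ν m ^ ε := by
          gcongr
          intro p hp
          obtain ⟨hps, hpν⟩ := Finset.mem_filter.mp hp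
          exact (hfin _).mem_toFinset.mpr ⟨hs hps, hpν⟩
  calc (T.card : ℝ) ≤ Nat.card Rˣ * ∏ p ∈ s.toFinset, (s.count p + 1 : ℝ) := by
        exact_mod_cast card_le_card_units_mul_prod_count hm hT
    _ ≤ Nat.card Rˣ * C₁ ^ V.card * ν m ^ ε := by
        grw [hprod, mul_assoc]

lemma exists_card_divisors_le_mul_gN_rpow {ε : ℝ} (hε : 0 < ε) :
    ∃ C > 0, ∀ m ≠ 0, ∀ T : Finset GaussianInt, (∀ d ∈ T, d ∣ m) →
      (T.card : ℝ) ≤ C * gN m ^ ε :=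
  exists_card_divisors_le_mul_rpow (ν := gNHom) (fun _ ↦ gN_eq_one_of_isUnit)
    (fun _ ↦ two_le_gN_of_prime) (fun B ↦ (finite_setOf_gN_le B).subset fun _ hp ↦ hp.2) hε

end DivisorBound

section SquareDifferences

variable {R : Type*} [CommRing R] [IsDomain R]

lemma injOn_sub_of_sq_sub_sq_eq (h2 : (2 : R) ≠ 0) {m : R} (hm : m ≠ 0) :
    Set.InjOn (fun x : R × R ↦ x.1 - x.2) {x | x.1 ^ 2 - x.2 ^ 2 = m} := by
  rintro ⟨x, y⟩ (hxy : x ^ 2 - y ^ 2 = m) ⟨z, w⟩ (hzw : z ^ 2 - w ^ 2 = m) (hsub : x - y = z - w)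
  have hmul : (x - y) * (x + y) = (x - y) * (z + w) := by
    linear_combination hxy - hzw - (z + w) * hsub
  have hadd : x + y = z + w := by
    refine mul_left_cancel₀ (fun h0 ↦ hm ?_) hmul
    rw [← hxy]
    linear_combination (x + y) * h0
  refine Prod.ext (mul_left_cancel₀ h2 ?_) (mul_left_cancel₀ h2 ?_)
  · linear_combination hsub + hadd
  · linear_combination hadd - hsub

variable [DecidableEq R] (A : Finset R)

lemma card_filter_sq_sub_sq_eq_zero_le :
    {x ∈ A ×ˢ A | x.1 ^ 2 - x.2 ^ 2 = 0}.card ≤ 2 * A.card := by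
  have hsub : {x ∈ A ×ˢ A | x.1 ^ 2 - x.2 ^ 2 = 0}
      ⊆ (A ×ˢ {1, -1}).image fun y : R × R ↦ (y.1, y.2 * y.1) := by
    rintro ⟨x, y⟩ h
    simp only [Finset.mem_filter, Finset.mem_product, sub_eq_zero, sq_eq_sq_iff_eq_or_eq_neg] at h
    obtain ⟨⟨hx, -⟩, rfl | rfl⟩ := h
    · exact Finset.mem_image.mpr ⟨(x, 1), by simp [hx]⟩
    · exact Finset.mem_image.mpr ⟨(-y, -1), by simp [hx]⟩
  calc _ ≤ (A ×ˢ ({1, -1} : Finset R)).card :=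
        (Finset.card_le_card hsub).trans Finset.card_image_le
    _ ≤ A.card * 2 := by
        rw [Finset.card_product]
        exact Nat.mul_le_mul_left _ Finset.card_le_two
    _ = 2 * A.card := mul_comm _ _

/-- The nonzero differences of two squares of elements of `A`. -/
def sqDiffs : Finset R :=
  ((A ×ˢ A).image fun x ↦ x.1 ^ 2 - x.2 ^ 2).erase 0

variable {A}

-- Factoring `x ^ 2 - y ^ 2 = (x - y) * (x + y)`, a nonzero value is taken at most as many times
-- as it has divisors `x - y`.
theorem sq_card_le_two_mul_card_add_mul_card_sqDiffs (h2 : (2 : R) ≠ 0) {D : ℝ}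
    (hD : ∀ m ∈ sqDiffs A, ∀ T : Finset R, (∀ d ∈ T, d ∣ m) → (T.card : ℝ) ≤ D) :
    (A.card : ℝ) ^ 2 ≤ 2 * A.card + D * (sqDiffs A).card := by
  set P := {x ∈ A ×ˢ A | ¬ x.1 ^ 2 - x.2 ^ 2 = 0} with hP
  have himage : P.image (fun x ↦ x.1 ^ 2 - x.2 ^ 2) = sqDiffs A := by
    rw [sqDiffs, hP, ← Finset.filter_ne', Finset.filter_image]
  have hfiber : (P.card : ℝ) ≤ D * (sqDiffs A).card := by
    rw [← himage]
    refine card_le_mul_card_image_of_card_fiber_le fun x hx ↦ ?_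
    have hxm : x.1 ^ 2 - x.2 ^ 2 ∈ sqDiffs A := himage ▸ Finset.mem_image_of_mem _ hx
    have hinj := (injOn_sub_of_sq_sub_sq_eq h2 (Finset.ne_of_mem_erase hxm)).mono
      (s₁ := ({y ∈ P | y.1 ^ 2 - y.2 ^ 2 = x.1 ^ 2 - x.2 ^ 2} : Finset (R × R)))
      fun y hy ↦ (Finset.mem_filter.mp hy).2
    rw [← Finset.card_image_of_injOn hinj]
    refine hD _ hxm _ fun d hd ↦ ?_
    obtain ⟨y, hy, rfl⟩ := Finset.mem_image.mp hd
    exact ⟨y.1 + y.2, by rw [← (Finset.mem_filter.mp hy).2]; ring⟩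
  have hzero : ({x ∈ A ×ˢ A | x.1 ^ 2 - x.2 ^ 2 = 0}.card : ℝ) ≤ 2 * A.card := by
    exact_mod_cast card_filter_sq_sub_sq_eq_zero_le A
  calc (A.card : ℝ) ^ 2 = {x ∈ A ×ˢ A | x.1 ^ 2 - x.2 ^ 2 = 0}.card + P.card := by
        rw [sq]
        exact_mod_cast (Finset.card_product A A).symm.trans
          (Finset.card_filter_add_card_filter_not _).symm
    _ ≤ 2 * A.card + D * (sqDiffs A).card := add_le_add hzero hfiber

end SquareDifferences

section CountingModuli

lemma exists_dvd_mul_sub_of_approx {c r₀ u v r s : GaussianInt} (hc : c ≠ 0) {η : ℝ}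
    (hr : ‖(r - u * (r₀ / c) : ℂ)‖ ≤ η) (hs : ‖(s - v * (r₀ / c) : ℂ)‖ ≤ η) :
    ∃ w : GaussianInt, ‖(w : ℂ)‖ ≤ 2 * η * ‖(c : ℂ)‖ ∧ c ∣ (u - v) * r₀ - w := by
  have hc' : (c : ℂ) ≠ 0 := GaussianInt.toComplex_eq_zero.not.mpr hc
  refine ⟨(u - v) * r₀ - (r - s) * c, ?_, r - s, by ring⟩
  calc ‖(((u - v) * r₀ - (r - s) * c : GaussianInt) : ℂ)‖
      = ‖(s - v * (r₀ / c) : ℂ) - (r - u * (r₀ / c))‖ * ‖(c : ℂ)‖ := by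
        rw [← norm_mul]
        congr 1
        simp only [map_sub, map_mul]
        field_simp
        ring
    _ ≤ 2 * η * ‖(c : ℂ)‖ := by
        grw [norm_sub_le, hr, hs, two_mul]

lemma card_le_of_dvd_mul_sub {c r : GaussianInt} (hc : c ≠ 0) (hrc : IsCoprime r c)
    {V : Finset GaussianInt} {X Y : ℝ} (hX : 0 ≤ X) (hY : 0 ≤ Y) (hVX : ∀ m ∈ V, ‖(m : ℂ)‖ ≤ X)
    (hVY : ∀ m ∈ V, ∃ w : GaussianInt, ‖(w : ℂ)‖ ≤ Y ∧ c ∣ m * r - w) :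
    (V.card : ℝ) ≤ (4 * X / ‖(c : ℂ)‖ + 1) ^ 2 * (2 * Y + 1) ^ 2 := by
  choose! w hwY hwc using hVY
  have hc' : 0 < ‖(c : ℂ)‖ := norm_pos_iff.mpr (GaussianInt.toComplex_eq_zero.not.mpr hc)
  have himage : ((V.image w).card : ℝ) ≤ (2 * Y + 1) ^ 2 := by
    refine card_le_of_forall_norm_sub_le (c := 0) hY fun z hz ↦ ?_
    obtain ⟨m, hm, rfl⟩ := Finset.mem_image.mp hz
    rw [sub_zero]
    exact hwY m hm
  have hfiber : (V.card : ℝ) ≤ (4 * X / ‖(c : ℂ)‖ + 1) ^ 2 * (V.image w).card := by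
    refine card_le_mul_card_image_of_card_fiber_le fun m₀ hm₀ ↦ ?_
    have hsub : {m ∈ V | w m = w m₀}
        ⊆ (latticeBox 0 (2 * X / ‖(c : ℂ)‖)).image fun k ↦ m₀ + c * k := by
      intro m hm
      obtain ⟨hmV, hw⟩ := Finset.mem_filter.mp hm
      have hdvd : c ∣ (m - m₀) * r := by
        have := dvd_sub (hwc m hmV) (hwc m₀ hm₀)
        rwa [hw, sub_sub_sub_cancel_right, ← sub_mul] at this
      obtain ⟨k, hk⟩ := hrc.symm.dvd_of_dvd_mul_right hdvd
      refine Finset.mem_image.mpr ⟨k, mem_latticeBox ?_, by rw [← hk]; ring⟩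
      rw [sub_zero, le_div_iff₀' hc', ← norm_mul, ← map_mul, ← hk, map_sub]
      linarith [norm_sub_le (m : ℂ) m₀, hVX m hmV, hVX m₀ hm₀]
    calc ({m ∈ V | w m = w m₀}.card : ℝ) ≤ (latticeBox 0 (2 * X / ‖(c : ℂ)‖)).card := by
          exact_mod_cast (Finset.card_le_card hsub).trans Finset.card_image_le
      _ ≤ (2 * (2 * X / ‖(c : ℂ)‖) + 1) ^ 2 := card_latticeBox_le _ (by positivity)
      _ = (4 * X / ‖(c : ℂ)‖ + 1) ^ 2 := by ring
  exact hfiber.trans (by gcongr)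

lemma le_two_add_of_sq_le {x c : ℝ} (hc : 0 ≤ c) (h : x ^ 2 ≤ 2 * x + c ^ 2) : x ≤ 2 + c := by
  nlinarith

lemma norm_le_of_mem_sqDiffs {A : Finset GaussianInt} {Q : ℝ} (hA : ∀ q ∈ A, gN q ≤ Q)
    {m : GaussianInt} (hm : m ∈ sqDiffs A) : ‖(m : ℂ)‖ ≤ 2 * Q := by
  obtain ⟨⟨x, y⟩, hxy, rfl⟩ := Finset.mem_image.mp (Finset.mem_of_mem_erase hm)
  obtain ⟨hx, hy⟩ := Finset.mem_product.mp hxy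
  calc ‖((x ^ 2 - y ^ 2 : GaussianInt) : ℂ)‖ ≤ gN x + gN y := by
        rw [map_sub, map_pow, map_pow, ← norm_toComplex_sq, ← norm_toComplex_sq]
        exact norm_sub_le _ _
    _ ≤ 2 * Q := by linarith [hA x hx, hA y hy]

section

variable {Q δ : ℝ} {q₀ r₀ : GaussianInt} {A : Finset GaussianInt}

-- A difference `m` of two squares of elements of `A` is small, and `m * r₀` is close to `0` modulo
-- `q₀ ^ 2`.
lemma card_sqDiffs_le (hQ : 0 < Q) (hδ : 0 ≤ δ) (hq₀ : Q / 2 ≤ gN q₀) (hq₀Q : gN q₀ ≤ Q)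
    (hcop : IsCoprime r₀ q₀) (hAQ : ∀ q ∈ A, gN q ≤ Q)
    (hA : ∀ q ∈ A, ∃ r : GaussianInt, ‖(r - q ^ 2 * (r₀ / q₀ ^ 2) : ℂ)‖ ≤ Q * δ) :
    ((sqDiffs A).card : ℝ) ≤ 17 ^ 2 * (4 * Q ^ 2 * δ + 1) ^ 2 := by
  have hq₀pos : 0 < gN q₀ := (half_pos hQ).trans_le hq₀
  have hq₀0 : q₀ ^ 2 ≠ 0 := pow_ne_zero 2 fun h ↦ hq₀pos.ne' (by simp [h, gN])
  have hnorm : ‖((q₀ ^ 2 : GaussianInt) : ℂ)‖ = gN q₀ := by rw [map_pow, norm_toComplex_sq]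
  have happrox : ∀ m ∈ sqDiffs A,
      ∃ w : GaussianInt, ‖(w : ℂ)‖ ≤ 2 * (Q * δ) * Q ∧ q₀ ^ 2 ∣ m * r₀ - w := by
    intro m hm
    obtain ⟨⟨x, y⟩, hxy, rfl⟩ := Finset.mem_image.mp (Finset.mem_of_mem_erase hm)
    obtain ⟨hx, hy⟩ := Finset.mem_product.mp hxy
    obtain ⟨r, hr⟩ := hA x hx
    obtain ⟨s, hs⟩ := hA y hy
    obtain ⟨w, hw, hdvd⟩ := exists_dvd_mul_sub_of_approx (u := x ^ 2) (v := y ^ 2) (r := r)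
      (s := s) (r₀ := r₀) hq₀0 (by simpa only [map_pow] using hr) (by simpa only [map_pow] using hs)
    refine ⟨w, hw.trans ?_, hdvd⟩
    rw [hnorm]
    gcongr
  have hratio : 4 * (2 * Q) / gN q₀ ≤ 16 := by
    rw [div_le_iff₀ hq₀pos]
    linarith
  calc ((sqDiffs A).card : ℝ)
      ≤ (4 * (2 * Q) / ‖((q₀ ^ 2 : GaussianInt) : ℂ)‖ + 1) ^ 2 * (2 * (2 * (Q * δ) * Q) + 1) ^ 2 :=
        card_le_of_dvd_mul_sub hq₀0 hcop.pow_right (by positivity) (by positivity)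
          (fun m ↦ norm_le_of_mem_sqDiffs hAQ) happrox
    _ ≤ (16 + 1) ^ 2 * (2 * (2 * (Q * δ) * Q) + 1) ^ 2 := by
        rw [hnorm]
        gcongr
    _ = 17 ^ 2 * (4 * Q ^ 2 * δ + 1) ^ 2 := by ring

end

theorem exists_card_moduli_le {ε : ℝ} (hε : 0 < ε) :
    ∃ C > 0, ∀ {Q δ : ℝ} {q₀ r₀ : GaussianInt} {A : Finset GaussianInt}, 1 ≤ Q → 0 ≤ δ →
      Q / 2 ≤ gN q₀ → gN q₀ ≤ Q → IsCoprime r₀ q₀ → (∀ q ∈ A, gN q ≤ Q) →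
      (∀ q ∈ A, ∃ r : GaussianInt, ‖(r - q ^ 2 * (r₀ / q₀ ^ 2) : ℂ)‖ ≤ Q * δ) →
      (A.card : ℝ) ≤ C * Q ^ ε * (1 + Q ^ 2 * δ) := by
  obtain ⟨D, hD, hdiv⟩ := exists_card_divisors_le_mul_gN_rpow hε
  refine ⟨2 + 68 * √D * 2 ^ ε, by positivity, fun {Q δ q₀ r₀ A} hQ hδ hq₀ hq₀Q hcop hAQ hA ↦ ?_⟩
  have hQ0 : 0 < Q := one_pos.trans_le hQ
  have hone : 1 ≤ Q ^ ε := Real.one_le_rpow hQ hε.le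
  have hdivQ : ∀ m ∈ sqDiffs A, ∀ T : Finset GaussianInt, (∀ d ∈ T, d ∣ m) →
      (T.card : ℝ) ≤ D * ((2 * Q) ^ 2) ^ ε := by
    intro m hm T hT
    refine (hdiv m (Finset.ne_of_mem_erase hm) T hT).trans ?_
    rw [gN_eq_norm_sq]
    gcongr
    exact norm_le_of_mem_sqDiffs hAQ hm
  have hsq := calc (A.card : ℝ) ^ 2
      ≤ 2 * A.card + D * ((2 * Q) ^ 2) ^ ε * (sqDiffs A).card :=
        sq_card_le_two_mul_card_add_mul_card_sqDiffs (by decide) hdivQ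
    _ ≤ 2 * A.card + D * ((2 * Q) ^ 2) ^ ε * (17 ^ 2 * (4 * Q ^ 2 * δ + 1) ^ 2) := by
        gcongr
        exact card_sqDiffs_le hQ0 hδ hq₀ hq₀Q hcop hAQ hA
    _ = 2 * A.card + (17 * √D * (2 ^ ε * Q ^ ε) * (4 * Q ^ 2 * δ + 1)) ^ 2 := by
        rw [← Real.rpow_pow_comm (by positivity), Real.mul_rpow zero_le_two hQ0.le]
        linear_combination -(17 * (2 ^ ε * Q ^ ε) * (4 * Q ^ 2 * δ + 1)) ^ 2 * Real.sq_sqrt hD.le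
  calc (A.card : ℝ) ≤ 2 + 17 * √D * (2 ^ ε * Q ^ ε) * (4 * Q ^ 2 * δ + 1) :=
        le_two_add_of_sq_le (by positivity) hsq
    _ ≤ 2 * (Q ^ ε * (1 + Q ^ 2 * δ))
          + 17 * √D * (2 ^ ε * Q ^ ε) * (4 * (1 + Q ^ 2 * δ)) := by
        gcongr
        · linarith [one_le_mul_of_one_le_of_one_le hone
            (le_add_of_nonneg_right (mul_nonneg (sq_nonneg Q) hδ))]
        · linarith
    _ = (2 + 68 * √D * 2 ^ ε) * Q ^ ε * (1 + Q ^ 2 * δ) := by ring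

end CountingModuli

section ReducedFamilies

/-- The fractions `r j / q j ^ 2`, `j ∈ J`, have nonzero denominators and are in lowest terms, and
no two of them with the same `q j` are congruent modulo `ℤ[i]`. -/
structure IsReducedFamily {κ : Type*} (J : Finset κ) (q r : κ → GaussianInt) : Prop where
  ne_zero : ∀ j ∈ J, q j ≠ 0
  isCoprime : ∀ j ∈ J, IsCoprime (r j) (q j)
  eq_of_dvd : ∀ i ∈ J, ∀ j ∈ J, q i = q j → q i ^ 2 ∣ r i - r j → i = j

lemma NearMod.exists_dvd_sub {δ : ℝ} {q r : GaussianInt} {α : ℂ} (hq : q ≠ 0)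
    (h : NearMod δ (r / q ^ 2) α) :
    ∃ s : GaussianInt, q ^ 2 ∣ r - s ∧ ‖(s - q ^ 2 * α : ℂ)‖ ≤ gN q * δ := by
  obtain ⟨z, hz⟩ := h
  have hq' : (q : ℂ) ≠ 0 := GaussianInt.toComplex_eq_zero.not.mpr hq
  refine ⟨r - q ^ 2 * z, ⟨z, by ring⟩, ?_⟩
  calc ‖((r - q ^ 2 * z : GaussianInt) - q ^ 2 * α : ℂ)‖
      = ‖(q : ℂ) ^ 2‖ * ‖(r / q ^ 2 - α - z : ℂ)‖ := by
        rw [← norm_mul]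
        congr 1
        simp only [map_sub, map_mul, map_pow]
        field_simp
        ring
    _ ≤ gN q * δ := by
        rw [norm_toComplex_sq]
        exact mul_le_mul_of_nonneg_left hz (gN_nonneg q)

lemma card_le_mul_of_gN_le {A : Finset GaussianInt} {Q : ℝ} (hQ : 1 ≤ Q)
    (hA : ∀ q ∈ A, gN q ≤ Q) : (A.card : ℝ) ≤ 9 * Q := by
  have hcard : (A.card : ℝ) ≤ (2 * √Q + 1) ^ 2 :=
    card_le_of_forall_norm_sub_le (c := 0) (Real.sqrt_nonneg Q) fun z hz ↦ by
      rw [sub_zero]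
      exact Real.le_sqrt_of_sq_le (gN_eq_norm_sq z ▸ hA z hz)
  nlinarith [Real.sq_sqrt (zero_le_one.trans hQ), Real.one_le_sqrt.mpr hQ]

namespace IsReducedFamily

variable {κ : Type*} {J I : Finset κ} {q r : κ → GaussianInt} (hJ : IsReducedFamily J q r)
include hJ

lemma mono (hI : I ⊆ J) : IsReducedFamily I q r where
  ne_zero j hj := hJ.ne_zero j (hI hj)
  isCoprime j hj := hJ.isCoprime j (hI hj)
  eq_of_dvd i hi j hj := hJ.eq_of_dvd i (hI hi) j (hI hj)

lemma card_le_mul_card_image {Q δ : ℝ} {α : ℂ} (hQ : 0 ≤ Q) (hδ : 0 ≤ δ)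
    (hqQ : ∀ j ∈ J, gN (q j) ≤ Q) (hα : ∀ j ∈ J, NearMod δ (r j / q j ^ 2) α) :
    (J.card : ℝ) ≤ (2 * (Q * δ) + 1) ^ 2 * (J.image q).card := by
  choose! s hdvd hs using fun j hj ↦ (hα j hj).exists_dvd_sub (hJ.ne_zero j hj)
  refine card_le_mul_card_image_of_card_fiber_le fun i _ ↦ ?_
  have hinj : Set.InjOn s ({j ∈ J | q j = q i} : Finset κ) := by
    intro j hj k hk hjk
    obtain ⟨hjJ, hjq⟩ := Finset.mem_filter.mp hj
    obtain ⟨hkJ, hkq⟩ := Finset.mem_filter.mp hk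
    have hqjk := hjq.trans hkq.symm
    refine hJ.eq_of_dvd j hjJ k hkJ hqjk ?_
    have hsub := dvd_sub (hdvd j hjJ) (hqjk ▸ hdvd k hkJ)
    rwa [hjk, sub_sub_sub_cancel_right] at hsub
  rw [← Finset.card_image_of_injOn hinj]
  refine card_le_of_forall_norm_sub_le (c := (q i : ℂ) ^ 2 * α) (by positivity) fun z hz ↦ ?_
  obtain ⟨j, hj, rfl⟩ := Finset.mem_image.mp hz
  obtain ⟨hjJ, hjq⟩ := Finset.mem_filter.mp hj
  grw [← hjq, hs j hjJ, hqQ j hjJ]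

end IsReducedFamily

theorem exists_card_nearMod_le {ε : ℝ} (hε : 0 < ε) :
    ∃ C > 0, ∀ {κ : Type*} {J : Finset κ} {q r : κ → GaussianInt} {Q δ : ℝ} {i : κ},
      IsReducedFamily J q r → 1 ≤ Q → 0 ≤ δ → (∀ j ∈ J, Q / 2 < gN (q j) ∧ gN (q j) ≤ Q) → i ∈ J →
      ({j ∈ J | NearMod δ (r j / q j ^ 2) (r i / q i ^ 2)}.card : ℝ)
        ≤ C * Q ^ ε * (1 + Q ^ 2 * δ + Q ^ 3 * δ ^ 2) := by
  obtain ⟨C, hC, hcount⟩ := exists_card_moduli_le hε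
  refine ⟨9 * C + 81, by positivity, fun {κ J q r Q δ i} hJ hQ hδ hqQ hi ↦ ?_⟩
  set I := {j ∈ J | NearMod δ (r j / q j ^ 2) (r i / q i ^ 2)}
  have hI := hJ.mono (I := I) (Finset.filter_subset _ _)
  have hIQ : ∀ j ∈ I, gN (q j) ≤ Q := fun j hj ↦ (hqQ j (Finset.mem_filter.mp hj).1).2
  have hnear : ∀ j ∈ I, NearMod δ (r j / q j ^ 2) (r i / q i ^ 2) :=
    fun j hj ↦ (Finset.mem_filter.mp hj).2
  have himageQ : ∀ x ∈ I.image q, gN x ≤ Q := Finset.forall_mem_image.mpr hIQ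
  have himage : ((I.image q).card : ℝ) ≤ C * Q ^ ε * (1 + Q ^ 2 * δ) := by
    refine hcount hQ hδ (hqQ i hi).1.le (hqQ i hi).2 (hJ.isCoprime i hi) himageQ
      (Finset.forall_mem_image.mpr fun j hj ↦ ?_)
    obtain ⟨s, -, hs⟩ := (hnear j hj).exists_dvd_sub (hI.ne_zero j hj)
    exact ⟨s, hs.trans (by grw [hIQ j hj])⟩
  have hcard := hI.card_le_mul_card_image (zero_le_one.trans hQ) hδ hIQ hnear
  have hone : 1 ≤ Q ^ ε := Real.one_le_rpow hQ hε.le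
  rcases le_total (Q * δ) 1 with hQδ | hQδ
  · calc (I.card : ℝ) ≤ (2 * 1 + 1) ^ 2 * (C * Q ^ ε * (1 + Q ^ 2 * δ)) := by
          grw [hcard, himage, hQδ]
      _ = 9 * C * Q ^ ε * (1 + Q ^ 2 * δ + 0) := by ring
      _ ≤ (9 * C + 81) * Q ^ ε * (1 + Q ^ 2 * δ + Q ^ 3 * δ ^ 2) := by
          gcongr
          · linarith
          · positivity
  · calc (I.card : ℝ) ≤ (2 * (Q * δ) + 1) ^ 2 * (9 * Q) := by
          grw [hcard, card_le_mul_of_gN_le hQ himageQ]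
      _ ≤ (2 * (Q * δ) + Q * δ) ^ 2 * (9 * Q) := by gcongr
      _ = 81 * 1 * (0 + Q ^ 3 * δ ^ 2) := by ring
      _ ≤ (9 * C + 81) * Q ^ ε * (1 + Q ^ 2 * δ + Q ^ 3 * δ ^ 2) := by
          gcongr
          · linarith
          · positivity

end ReducedFamilies

section DyadicBlocks

lemma abs_re_im_le_floor_sqrt {N : ℝ} {n : GaussianInt} (hn : gN n ≤ N) :
    |n.re| ≤ ⌊√N⌋₊ ∧ |n.im| ≤ ⌊√N⌋₊ := by
  have hle {x : ℤ} (hx : (x : ℝ) ^ 2 ≤ N) : |x| ≤ ⌊√N⌋₊ := by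
    rw [Int.abs_eq_natAbs, Nat.cast_le]
    refine Nat.le_floor ?_
    rw [Nat.cast_natAbs, Int.cast_abs]
    exact Real.abs_le_sqrt hx
  rw [gN] at hn
  exact ⟨hle (by linarith [sq_nonneg (n.im : ℝ)]), hle (by linarith [sq_nonneg (n.re : ℝ)])⟩

lemma sq_mul_one_add_add_le {Q N M : ℝ} (hQ : 1 ≤ Q) (hN : 0 ≤ N) (hM : 0 < M)
    (hMN : M ≤ 2 * √N + 1) :
    M ^ 2 * (1 + Q ^ 2 * (2 / M) + Q ^ 3 * (2 / M) ^ 2) ≤ 8 * (Q ^ 3 + Q ^ 2 * √N + N) := by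
  calc M ^ 2 * (1 + Q ^ 2 * (2 / M) + Q ^ 3 * (2 / M) ^ 2)
      = M ^ 2 + 2 * Q ^ 2 * M + 4 * Q ^ 3 := by
        field_simp
        ring
    _ ≤ (2 * √N + 1) ^ 2 + 2 * Q ^ 2 * (2 * √N + 1) + 4 * Q ^ 3 := by gcongr
    _ ≤ 8 * (Q ^ 3 + Q ^ 2 * √N + N) := by
        have hQ2 : 1 ≤ Q ^ 2 := one_le_pow₀ hQ
        have hQ3 : Q ^ 2 ≤ Q ^ 3 := pow_le_pow_right₀ hQ (by norm_num)
        nlinarith [Real.sq_sqrt hN, Real.sqrt_nonneg N, sq_nonneg (√N - 1)]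

theorem exists_sum_norm_expSum_sq_le_of_half_lt {ε : ℝ} (hε : 0 < ε) :
    ∃ C > 0, ∀ {κ : Type*} {J : Finset κ} {q r : κ → GaussianInt} {S : Finset GaussianInt}
      {Q N : ℝ} (a : GaussianInt → ℂ), IsReducedFamily J q r → 1 ≤ Q → 0 ≤ N →
      (∀ j ∈ J, Q / 2 < gN (q j) ∧ gN (q j) ≤ Q) → (∀ n ∈ S, gN n ≤ N) →
      ∑ j ∈ J, ‖expSum S a (r j / q j ^ 2)‖ ^ 2
        ≤ C * Q ^ ε * (Q ^ 3 + Q ^ 2 * √N + N) * ∑ n ∈ S, ‖a n‖ ^ 2 := by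
  classical
  obtain ⟨C, hC, hcount⟩ := exists_card_nearMod_le hε
  refine ⟨8 * Real.exp (2 * Real.pi) * C, by positivity,
    fun {κ J q r S Q N} a hJ hQ hN hqQ hSN ↦ ?_⟩
  set M : ℝ := 2 * ⌊√N⌋₊ + 1 with hM
  have hM0 : 0 < M := by positivity
  have hMN : M ≤ 2 * √N + 1 := by
    rw [hM]
    gcongr
    exact Nat.floor_le (Real.sqrt_nonneg N)
  have hsieve := sum_norm_expSum_sq_le (fun n hn ↦ abs_re_im_le_floor_sqrt (hSN n hn))
    (K := C * Q ^ ε * (1 + Q ^ 2 * (2 / M) + Q ^ 3 * (2 / M) ^ 2)) (by positivity)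
    (fun i hi ↦ by simpa [hM] using hcount hJ hQ (by positivity : 0 ≤ 2 / M) hqQ hi) a
  calc ∑ j ∈ J, ‖expSum S a (r j / q j ^ 2)‖ ^ 2
      ≤ Real.exp (2 * Real.pi) * C * Q ^ ε
          * (M ^ 2 * (1 + Q ^ 2 * (2 / M) + Q ^ 3 * (2 / M) ^ 2)) * ∑ n ∈ S, ‖a n‖ ^ 2 :=
        hsieve.trans_eq (by ring)
    _ ≤ Real.exp (2 * Real.pi) * C * Q ^ ε * (8 * (Q ^ 3 + Q ^ 2 * √N + N))
          * ∑ n ∈ S, ‖a n‖ ^ 2 := by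
        grw [sq_mul_one_add_add_le hQ hN hM0 hMN]
    _ = 8 * Real.exp (2 * Real.pi) * C * Q ^ ε * (Q ^ 3 + Q ^ 2 * √N + N)
          * ∑ n ∈ S, ‖a n‖ ^ 2 := by ring

lemma le_div_mul_rpow_of_le_half_add {T : ℝ → ℝ} {B ε Q : ℝ} (hε : 0 < ε) (hB : 0 ≤ B)
    (hQ : 0 ≤ Q) (hT : ∀ X < 1, T X ≤ 0)
    (hstep : ∀ X, 1 ≤ X → X ≤ Q → T X ≤ T (X / 2) + B * X ^ ε) :
    T Q ≤ B / (1 - 2⁻¹ ^ ε) * Q ^ ε := by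
  have hlt : (2⁻¹ : ℝ) ^ ε < 1 := Real.rpow_lt_one (by norm_num) (by norm_num) hε
  have hfixed : B / (1 - 2⁻¹ ^ ε) * 2⁻¹ ^ ε + B = B / (1 - 2⁻¹ ^ ε) := by
    field_simp [(sub_pos.mpr hlt).ne']
    ring
  have : 0 ≤ B / (1 - 2⁻¹ ^ ε) := div_nonneg hB (sub_pos.mpr hlt).le
  have hind (n : ℕ) : ∀ X, 0 ≤ X → X ≤ Q → X < 2 ^ n → T X ≤ B / (1 - 2⁻¹ ^ ε) * X ^ ε := by
    induction n with
    | zero => exact fun X hX _ hX1 ↦ (hT X (by simpa using hX1)).trans (by positivity)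
    | succ n ih =>
      intro X hX hXQ hXn
      rcases lt_or_ge X 1 with hX1 | hX1
      · exact (hT X hX1).trans (by positivity)
      · calc T X ≤ B / (1 - 2⁻¹ ^ ε) * (X * 2⁻¹) ^ ε + B * X ^ ε := by
              refine (hstep X hX1 hXQ).trans (add_le_add_left ?_ _)
              rw [← div_eq_mul_inv]
              exact ih _ (by linarith) (by linarith) (by rw [pow_succ] at hXn; linarith)
          _ = (B / (1 - 2⁻¹ ^ ε) * 2⁻¹ ^ ε + B) * X ^ ε := by
              rw [Real.mul_rpow hX (by norm_num)]
              ring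
          _ = B / (1 - 2⁻¹ ^ ε) * X ^ ε := by rw [hfixed]
  obtain ⟨n, hn⟩ := pow_unbounded_of_one_lt Q one_lt_two
  exact hind n Q hQ le_rfl hn

lemma sum_filter_le_eq_add {κ : Type*} {J : Finset κ} {g f : κ → ℝ} {x y : ℝ} (hxy : x ≤ y) :
    ∑ j ∈ J with g j ≤ y, f j
      = ∑ j ∈ J with g j ≤ x, f j + ∑ j ∈ J with x < g j ∧ g j ≤ y, f j := by
  rw [← Finset.sum_filter_add_sum_filter_not _ (fun j ↦ g j ≤ x), Finset.filter_filter,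
    Finset.filter_filter]
  congr 1 <;> refine Finset.sum_congr (Finset.filter_congr fun j _ ↦ ?_) fun _ _ ↦ rfl
  · exact ⟨And.right, fun h ↦ ⟨h.trans hxy, h⟩⟩
  · rw [not_le, and_comm]

theorem exists_sum_norm_expSum_sq_le {ε : ℝ} (hε : 0 < ε) :
    ∃ C > 0, ∀ {κ : Type*} {J : Finset κ} {q r : κ → GaussianInt} {S : Finset GaussianInt}
      {Q N : ℝ} (a : GaussianInt → ℂ), IsReducedFamily J q r → 0 ≤ Q → 0 ≤ N →
      (∀ j ∈ J, gN (q j) ≤ Q) → (∀ n ∈ S, gN n ≤ N) →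
      ∑ j ∈ J, ‖expSum S a (r j / q j ^ 2)‖ ^ 2
        ≤ C * Q ^ ε * (Q ^ 3 + Q ^ 2 * √N + N) * ∑ n ∈ S, ‖a n‖ ^ 2 := by
  classical
  obtain ⟨C, hC, hblock⟩ := exists_sum_norm_expSum_sq_le_of_half_lt hε
  have hlt : (2⁻¹ : ℝ) ^ ε < 1 := Real.rpow_lt_one (by norm_num) (by norm_num) hε
  refine ⟨C / (1 - 2⁻¹ ^ ε), div_pos hC (sub_pos.mpr hlt),
    fun {κ J q r S Q N} a hJ hQ hN hqQ hSN ↦ ?_⟩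
  let T (X : ℝ) : ℝ := ∑ j ∈ J with gN (q j) ≤ X, ‖expSum S a (r j / q j ^ 2)‖ ^ 2
  have hT : ∀ X < 1, T X ≤ 0 := fun X hX ↦ by
    refine (Finset.sum_eq_zero fun j hj ↦ ?_).le
    obtain ⟨hjJ, hjX⟩ := Finset.mem_filter.mp hj
    exact absurd (one_le_gN (hJ.ne_zero j hjJ)) (by linarith)
  have hstep : ∀ X, 1 ≤ X → X ≤ Q → T X ≤ T (X / 2)
      + C * (Q ^ 3 + Q ^ 2 * √N + N) * (∑ n ∈ S, ‖a n‖ ^ 2) * X ^ ε := fun X hX hXQ ↦ by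
    simp only [T]
    rw [sum_filter_le_eq_add (half_le_self (zero_le_one.trans hX))]
    gcongr
    calc ∑ j ∈ J with X / 2 < gN (q j) ∧ gN (q j) ≤ X, ‖expSum S a (r j / q j ^ 2)‖ ^ 2
        ≤ C * X ^ ε * (X ^ 3 + X ^ 2 * √N + N) * ∑ n ∈ S, ‖a n‖ ^ 2 :=
          hblock a (hJ.mono (Finset.filter_subset _ _)) hX hN
            (fun j hj ↦ (Finset.mem_filter.mp hj).2) hSN
      _ ≤ C * X ^ ε * (Q ^ 3 + Q ^ 2 * √N + N) * ∑ n ∈ S, ‖a n‖ ^ 2 := by gcongr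
      _ = C * (Q ^ 3 + Q ^ 2 * √N + N) * (∑ n ∈ S, ‖a n‖ ^ 2) * X ^ ε := by ring
  calc ∑ j ∈ J, ‖expSum S a (r j / q j ^ 2)‖ ^ 2 = T Q := by
        rw [← Finset.filter_true_of_mem hqQ]
    _ ≤ C * (Q ^ 3 + Q ^ 2 * √N + N) * (∑ n ∈ S, ‖a n‖ ^ 2) / (1 - 2⁻¹ ^ ε) * Q ^ ε :=
        le_div_mul_rpow_of_le_half_add hε (by positivity) hQ hT hstep
    _ = C / (1 - 2⁻¹ ^ ε) * Q ^ ε * (Q ^ 3 + Q ^ 2 * √N + N) * ∑ n ∈ S, ‖a n‖ ^ 2 := by ring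

end DyadicBlocks

section ResidueSystems

lemma isCoprime_of_mk_eq_unit {R : Type*} [CommRing R] {m r : R}
    {u : (R ⧸ Ideal.span {m})ˣ} (h : Ideal.Quotient.mk (Ideal.span {m}) r = u) :
    IsCoprime r m := by
  obtain ⟨s, hs⟩ := Ideal.Quotient.mk_surjective (↑u⁻¹ : R ⧸ Ideal.span {m})
  have hmk : Ideal.Quotient.mk (Ideal.span {m}) (r * s) = Ideal.Quotient.mk _ 1 := by
    rw [map_mul, h, hs, Units.mul_inv, map_one]
  obtain ⟨t, ht⟩ := Ideal.mem_span_singleton.mp (Ideal.Quotient.eq.mp hmk)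
  exact ⟨s, -t, by linear_combination ht⟩

variable {rep : (q : GaussianInt) → (GaussianInt ⧸ Ideal.span {q ^ 2})ˣ → GaussianInt}
  (hrep : ∀ (q : GaussianInt) (u : (GaussianInt ⧸ Ideal.span {q ^ 2})ˣ),
    Ideal.Quotient.mk (Ideal.span {q ^ 2}) (rep q u) = (u : GaussianInt ⧸ Ideal.span {q ^ 2}))
include hrep

lemma isReducedFamily_rep {p : GaussianInt → Prop} (hp : ∀ q, p q → q ≠ 0)
    (J : Finset (Σ q : {q // p q}, (GaussianInt ⧸ Ideal.span {(q : GaussianInt) ^ 2})ˣ)) :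
    IsReducedFamily J (fun x ↦ x.1) (fun x ↦ rep x.1 x.2) where
  ne_zero x _ := hp _ x.1.2
  isCoprime x _ := (IsCoprime.pow_right_iff two_pos).mp (isCoprime_of_mk_eq_unit (hrep x.1 x.2))
  eq_of_dvd := by
    rintro ⟨⟨q, hq⟩, u⟩ - ⟨⟨q', hq'⟩, v⟩ - (rfl : q = q') hdvd
    have huv : u = v := by
      ext
      rw [← hrep, ← hrep, Ideal.Quotient.eq, Ideal.mem_span_singleton]
      exact hdvd
    rw [huv]

end ResidueSystems

lemma tsum_subtype_eq_sum_toFinset {β M : Type*} [AddCommMonoid M] [TopologicalSpace M]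
    {p : β → Prop} (hp : {x | p x}.Finite) (f : β → M) :
    ∑' x : {x // p x}, f x = ∑ x ∈ hp.toFinset, f x := by
  rw [← Finset.tsum_subtype', hp.coe_toFinset]
  rfl

lemma tsum_mul_e_eq_expSum {N : ℝ} (a : GaussianInt → ℂ) (r q : GaussianInt) :
    ∑' n : {n : GaussianInt // gN n ≤ N}, a n * e (((n : GaussianInt) * r / q ^ 2 : ℂ)).re
      = expSum (finite_setOf_gN_le N).toFinset a (r / q ^ 2) := by
  rw [tsum_subtype_eq_sum_toFinset (finite_setOf_gN_le N) fun n ↦ a n * e ((n * r / q ^ 2 : ℂ)).re]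
  simp only [expSum, mul_div_assoc]

theorem large_sieve_square_moduli_gaussian_general :
    ∀ ε : ℝ, 0 < ε → ∃ C : ℝ, 0 < C ∧
      ∀ (Q N : ℝ), 0 ≤ Q → 0 ≤ N → ∀ a : GaussianInt → ℂ,
      ∀ rep : (q : GaussianInt) → (GaussianInt ⧸ Ideal.span {q ^ 2})ˣ → GaussianInt,
      (∀ (q : GaussianInt) (u : (GaussianInt ⧸ Ideal.span {q ^ 2})ˣ),
        Ideal.Quotient.mk (Ideal.span {q ^ 2}) (rep q u)
          = (u : GaussianInt ⧸ Ideal.span {q ^ 2})) →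
      (∑' q : {q : GaussianInt // q ≠ 0 ∧ gN q ≤ Q},
        ∑' u : (GaussianInt ⧸ Ideal.span {(q : GaussianInt) ^ 2})ˣ,
          ‖∑' n : {n : GaussianInt // gN n ≤ N},
              a n * e ((((n : GaussianInt) : ℂ) * ((rep q u : GaussianInt) : ℂ)
                / ((q : GaussianInt) : ℂ) ^ 2).re)‖ ^ 2)
        ≤ C * Q ^ ε * (Q ^ 3 + Q ^ 2 * √N + N) *
          ∑' n : {n : GaussianInt // gN n ≤ N}, ‖a n‖ ^ 2 := by
  intro ε hε
  obtain ⟨C, hC, hbound⟩ := exists_sum_norm_expSum_sq_le hε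
  refine ⟨C, hC, fun Q N hQ hN a rep hrep ↦ ?_⟩
  have : Fintype {q : GaussianInt // q ≠ 0 ∧ gN q ≤ Q} :=
    @Fintype.ofFinite _ ((finite_setOf_gN_le Q).subset fun _ h ↦ h.2).to_subtype
  have (q : {q : GaussianInt // q ≠ 0 ∧ gN q ≤ Q}) :
      Fintype (GaussianInt ⧸ Ideal.span {(q : GaussianInt) ^ 2})ˣ :=
    have := finite_quotient_span_singleton (pow_ne_zero 2 q.2.1)
    .ofFinite _
  simp only [tsum_mul_e_eq_expSum, tsum_fintype, ← Fintype.sum_sigma']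
  rw [tsum_subtype_eq_sum_toFinset (finite_setOf_gN_le N) fun n ↦ ‖a n‖ ^ 2]
  exact hbound a (isReducedFamily_rep hrep (fun _ h ↦ h.1) Finset.univ) hQ hN
    (fun x _ ↦ x.1.2.2) fun n hn ↦ (finite_setOf_gN_le N).mem_toFinset.mp hn

/-- **The large sieve with square moduli for ℤ[i]** (Theorem 1).
For every `ε > 0` there is `C = C(ε) > 0` such that for all `Q, N ≥ 1`, all complex
sequences `(a_n)` indexed by Gaussian integers, and any fixed complete system of
representatives of the invertible residue classes modulo `q²` (given by `rep`), one has
`∑_{0 ≠ q, N(q) ≤ Q} ∑_{r mod q², (r,q)=1} |∑_{N(n) ≤ N} a_n e(Re(n r / q²))|²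
  ≤ C (QN)^ε (Q³ + Q²√N + √Q · N) ∑_{N(n) ≤ N} |a_n|²`. -/
theorem large_sieve_square_moduli_gaussian :
    ∀ ε : ℝ, 0 < ε → ∃ C : ℝ, 0 < C ∧
      ∀ (Q N : ℝ), 1 ≤ Q → 1 ≤ N → ∀ a : GaussianInt → ℂ,
      ∀ rep : (q : GaussianInt) → (GaussianInt ⧸ Ideal.span {q ^ 2})ˣ → GaussianInt,
      (∀ (q : GaussianInt) (u : (GaussianInt ⧸ Ideal.span {q ^ 2})ˣ),
        Ideal.Quotient.mk (Ideal.span {q ^ 2}) (rep q u)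
          = (u : GaussianInt ⧸ Ideal.span {q ^ 2})) →
      (∑' q : {q : GaussianInt // q ≠ 0 ∧ gN q ≤ Q},
        ∑' u : (GaussianInt ⧸ Ideal.span {(q : GaussianInt) ^ 2})ˣ,
          ‖∑' n : {n : GaussianInt // gN n ≤ N},
              a n * e ((((n : GaussianInt) : ℂ) * ((rep q u : GaussianInt) : ℂ)
                / ((q : GaussianInt) : ℂ) ^ 2).re)‖ ^ 2)
        ≤ C * (Q * N) ^ ε * (Q ^ 3 + Q ^ 2 * Real.sqrt N + Real.sqrt Q * N) *
          ∑' n : {n : GaussianInt // gN n ≤ N}, ‖a n‖ ^ 2 := by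
  intro ε hε
  obtain ⟨C, hC, hbound⟩ := large_sieve_square_moduli_gaussian_general ε hε
  refine ⟨C, hC, fun Q N hQ hN a rep hrep ↦
    (hbound Q N (zero_le_one.trans hQ) (zero_le_one.trans hN) a rep hrep).trans ?_⟩
  have hQN : Q ≤ Q * N := le_mul_of_one_le_right (zero_le_one.trans hQ) hN
  have hN : N ≤ √Q * N := le_mul_of_one_le_left (zero_le_one.trans hN) (Real.one_le_sqrt.mpr hQ)
  gcongr
end
end

section
/- Let f : ℝ^d → ℂ be a smooth function of rapid decay (i.e. every derivative of f decays faster than any negative power of ‖y‖₂), let Λ be a lattice of full rank in ℝ^d, let B > 0 and a ∈ ℝ^d. Then ∑_{y ∈ a+Λ} f(y/B) = (B^d / Vol(ℝ^d/Λ)) · ∑_{x ∈ Λ'} e(a·x) · f̂(Bx), where Λ' := {x ∈ ℝ^d : x·y ∈ ℤ for all y ∈ Λ} is the dual lattice and f̂(x) := ∫_{ℝ^d} f(y) e(−x·y) dy is the Fourier transform of f. -/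
noncomputable section

open MeasureTheory
open scoped RealInnerProductSpace

/-!
In coordinates along a `ℤ`-basis of `Λ` the periodization `x ↦ ∑ v ∈ Λ, f (x + v)` descends to a
continuous function on the standard torus. Unfolding its integral over a fundamental domain shows
that its Fourier coefficients are the values of `𝓕 f` on the dual lattice, divided by the covolume
of `Λ`; they are summable, so the Fourier series represents the periodization everywhere. Applying
this to `f (B⁻¹ • ·)` at the point `a` gives the scaled and shifted formula.
-/

open Asymptotics Filter Module TopologicalSpace
open scoped FourierTransform Pointwise

section DualLattice

variable {E : Type*} [NormedAddCommGroup E] [InnerProductSpace ℝ E]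

lemma nondegenerate_innerₗ : LinearMap.BilinForm.Nondegenerate (innerₗ E) :=
  ⟨fun x hx ↦ inner_self_eq_zero.mp (hx x), fun x hx ↦ inner_self_eq_zero.mp (hx x)⟩

/-- The dual `{x | ∀ y ∈ Λ, ⟪x, y⟫ ∈ ℤ}` of a subgroup `Λ` of a real inner product space, as an
instance of Mathlib's dual submodule for the bilinear form `innerₗ E`. -/
def dualLattice (Λ : Submodule ℤ E) : Submodule ℤ E :=
  LinearMap.BilinForm.dualSubmodule (innerₗ E) Λ

lemma mem_dualLattice {Λ : Submodule ℤ E} {x : E} :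
    x ∈ dualLattice Λ ↔ ∀ y ∈ Λ, ∃ m : ℤ, ⟪x, y⟫ = (m : ℝ) := by
  simp only [dualLattice, LinearMap.BilinForm.mem_dualSubmodule, Submodule.mem_one,
    algebraMap_int_eq, eq_intCast, innerₗ_apply_apply, eq_comm]

variable [FiniteDimensional ℝ E] {ι : Type*} [DecidableEq ι]
  {Λ : Submodule ℤ E} [DiscreteTopology Λ] [IsZLattice ℝ Λ] (b : Basis ι ℤ Λ)

lemma dualLattice_eq_span_dualBasis [Finite ι] : dualLattice Λ = Submodule.span ℤ (Set.range
    (LinearMap.BilinForm.dualBasis (innerₗ E) nondegenerate_innerₗ (b.ofZLatticeBasis ℝ Λ))) := by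
  rw [dualLattice, ← LinearMap.BilinForm.dualSubmodule_span_of_basis, b.ofZLatticeBasis_span ℝ]

instance : DiscreteTopology (dualLattice Λ) := by
  classical
  rw [dualLattice_eq_span_dualBasis (Free.chooseBasis ℤ Λ)]
  infer_instance

instance : IsZLattice ℝ (dualLattice Λ) := by
  classical
  refine ⟨?_⟩
  rw [dualLattice_eq_span_dualBasis (Free.chooseBasis ℤ Λ)]
  exact IsZLattice.span_top (K := ℝ)

/-- The `ℤ`-basis of the dual lattice dual to the `ℤ`-basis `b` of `Λ`. -/
def dualLatticeBasis [Finite ι] : Basis ι ℤ (dualLattice Λ) :=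
  ((LinearMap.BilinForm.dualBasis (innerₗ E) nondegenerate_innerₗ
    (b.ofZLatticeBasis ℝ Λ)).restrictScalars ℤ).map
    (LinearEquiv.ofEq _ _ (dualLattice_eq_span_dualBasis b).symm)

lemma dualLatticeBasis_repr_apply [Finite ι] (w : dualLattice Λ) (i : ι) :
    ((dualLatticeBasis b).repr w i : ℝ) = ⟪(w : E), b i⟫ := by
  rw [dualLatticeBasis, Basis.map_repr, LinearEquiv.trans_apply, ← eq_intCast (algebraMap ℤ ℝ),
    Basis.restrictScalars_repr_apply, LinearMap.BilinForm.dualBasis_repr_apply]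
  simp

lemma inner_eq_sum_repr_mul_repr [Fintype ι] (w : dualLattice Λ) (x : E) :
    ⟪(w : E), x⟫ =
      ∑ i, ((dualLatticeBasis b).repr w i : ℝ) * (b.ofZLatticeBasis ℝ Λ).repr x i := by
  conv_lhs => rw [← (b.ofZLatticeBasis ℝ Λ).sum_repr x]
  simp only [inner_sum, inner_smul_right, b.ofZLatticeBasis_apply ℝ, dualLatticeBasis_repr_apply,
    mul_comm]

end DualLattice

section Decay

variable {E F : Type*} [NormedAddCommGroup E] [NormedAddCommGroup F]

lemma isBigO_norm_restrict_comp_addRight_cocompact [ProperSpace E] (f : C(E, F)) {r : ℝ}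
    (hr : 0 < r) (hf : f =O[cocompact E] (‖·‖ ^ (-r))) (K : Compacts E) :
    (fun x ↦ ‖(f.comp (.addRight x)).restrict K‖) =O[cocompact E] (‖·‖ ^ (-r)) := by
  obtain ⟨C, hC, hf⟩ := hf.exists_pos
  obtain ⟨R, hR⟩ := K.isCompact.isBounded.subset_closedBall 0
  rw [IsBigOWith, ← Metric.cobounded_eq_cocompact, ← comap_norm_atTop, eventually_comap] at hf
  obtain ⟨M, hM⟩ := eventually_atTop.mp hf
  rw [← Metric.cobounded_eq_cocompact, ← comap_norm_atTop]
  refine IsBigO.of_bound (C * (1 / 2) ^ (-r)) <| eventually_comap.mpr <|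
    eventually_atTop.mpr ⟨max (2 * |R|) (2 * |M|) + 1, ?_⟩
  rintro _ hx x rfl
  have hxR : 2 * |R| + 1 ≤ ‖x‖ := le_trans (by gcongr; exact le_max_left _ _) hx
  have hxM : 2 * |M| + 1 ≤ ‖x‖ := le_trans (by gcongr; exact le_max_right _ _) hx
  have hx_pos : 0 < ‖x‖ := by linarith [abs_nonneg R]
  rw [norm_norm, ContinuousMap.norm_le _ (by positivity)]
  rintro ⟨y, hy⟩
  have hyx : 1 / 2 * ‖x‖ ≤ ‖y + x‖ := by
    have hyR : ‖y‖ ≤ R := mem_closedBall_zero_iff.mp (hR hy)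
    linarith [norm_sub_le (y + x) y, congrArg norm (add_sub_cancel_left y x), le_abs_self R]
  calc ‖f (y + x)‖ ≤ C * ‖‖y + x‖ ^ (-r)‖ :=
        hM ‖y + x‖ (by linarith [le_abs_self M, abs_nonneg M]) _ rfl
    _ = C * ‖y + x‖ ^ (-r) := by rw [Real.norm_of_nonneg (by positivity)]
    _ ≤ C * (1 / 2 * ‖x‖) ^ (-r) := by
      gcongr 1
      exact Real.rpow_le_rpow_of_nonpos (by positivity) hyx (by linarith)
    _ = C * (1 / 2) ^ (-r) * ‖‖x‖ ^ (-r)‖ := by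
      rw [Real.mul_rpow (by positivity) (by positivity), Real.norm_of_nonneg (by positivity),
        mul_assoc]

variable [NormedSpace ℝ E]

lemma isBigO_comp_smul_cocompact {f : E → F} {c r : ℝ} (hc : c ≠ 0)
    (hf : f =O[cocompact E] (‖·‖ ^ (-r))) :
    (fun x ↦ f (c • x)) =O[cocompact E] (‖·‖ ^ (-r)) := by
  have hsmul : Tendsto (c • · : E → E) (cocompact E) (cocompact E) :=
    (Homeomorph.smulOfNeZero c hc).isClosedEmbedding.tendsto_cocompact
  refine (hf.comp_tendsto hsmul).trans <| .of_bound (|c| ^ (-r)) <| .of_forall fun x ↦ le_of_eq ?_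
  simp only [Function.comp_apply, norm_smul, Real.norm_eq_abs]
  rw [Real.mul_rpow (abs_nonneg c) (norm_nonneg x), abs_mul, abs_of_nonneg (by positivity)]

lemma summable_comp_coe_of_isBigO [FiniteDimensional ℝ E] [CompleteSpace F] (Λ : Submodule ℤ E)
    [DiscreteTopology Λ] [IsZLattice ℝ Λ] {g : E → F} {r : ℝ} (hr : finrank ℝ E < r)
    (hg : g =O[cocompact E] (‖·‖ ^ (-r))) : Summable fun v : Λ ↦ g v := by
  have hΛ : Tendsto ((↑) : Λ → E) cofinite (cocompact E) :=
    AddSubgroup.tendsto_coe_cofinite_of_discrete Λ.toAddSubgroup ⟨‹_›⟩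
  refine summable_of_isBigO ?_ (hg.comp_tendsto hΛ)
  exact ZLattice.summable_norm_rpow Λ (-r) (by rw [ZLattice.rank ℝ Λ]; linarith)

end Decay

section Unfolding

lemma setIntegral_tsum_vadd {G X V : Type*} [AddGroup G] [Countable G] [AddAction G X]
    [MeasurableSpace X] [MeasurableConstVAdd G X] {μ : Measure X} [VAddInvariantMeasure G X μ]
    [NormedAddCommGroup V] [NormedSpace ℝ V] {s : Set X} (hs : IsAddFundamentalDomain G s μ)
    {f : X → V} (hf : Integrable f μ) :
    ∫ x in s, ∑' g : G, f (g +ᵥ x) ∂μ = ∫ x, f x ∂μ := by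
  rw [hs.integral_eq_tsum'' f hf, integral_tsum]
  · exact fun g ↦ ((measurePreserving_vadd g μ).integrable_comp_of_integrable
      hf).restrict.aestronglyMeasurable
  · rw [← hs.lintegral_eq_tsum'' (‖f ·‖ₑ)]
    exact hf.hasFiniteIntegral.ne

variable {E F : Type*} [NormedAddCommGroup E] [NormedAddCommGroup F] (Λ : Submodule ℤ E)

section

variable [MeasurableSpace E] [BorelSpace E]

instance : MeasurableConstVAdd Λ E :=
  inferInstanceAs (MeasurableConstVAdd Λ.toAddSubgroup E)

instance (μ : Measure E) [μ.IsAddLeftInvariant] : VAddInvariantMeasure Λ E μ :=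
  inferInstanceAs (VAddInvariantMeasure Λ.toAddSubgroup E μ)

end

variable [NormedSpace ℝ E] [FiniteDimensional ℝ E] [DiscreteTopology Λ] [IsZLattice ℝ Λ]

lemma exists_compacts_iUnion_vadd_eq_univ :
    ∃ K : Compacts E, ⋃ v : Λ, (v +ᵥ (K : Set E)) = Set.univ := by
  let b := (Free.chooseBasis ℤ Λ).ofZLatticeBasis ℝ Λ
  refine ⟨⟨closure (ZSpan.fundamentalDomain b),
    (ZSpan.fundamentalDomain_isBounded b).isCompact_closure⟩, Set.eq_univ_of_forall fun x ↦ ?_⟩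
  have hfloor : (ZSpan.floor b x : E) ∈ Λ :=
    ((Free.chooseBasis ℤ Λ).ofZLatticeBasis_span ℝ).le (ZSpan.floor b x).2
  refine Set.mem_iUnion.mpr ⟨⟨ZSpan.floor b x, hfloor⟩, ZSpan.fract b x,
    subset_closure (ZSpan.fract_mem_fundamentalDomain b x), ?_⟩
  simp [ZSpan.fract_apply]

lemma integrable_of_summable_norm_restrict_comp_addRight [MeasurableSpace E] [BorelSpace E]
    (μ : Measure E) [μ.IsAddLeftInvariant] [IsLocallyFiniteMeasure μ] {f : C(E, F)}
    (hf : ∀ K : Compacts E, Summable fun v : Λ ↦ ‖(f.comp (.addRight (v : E))).restrict K‖) :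
    Integrable f μ := by
  obtain ⟨K, hK⟩ := exists_compacts_iUnion_vadd_eq_univ Λ
  let s (v : Λ) : Compacts E := ⟨v +ᵥ (K : Set E), K.isCompact.vadd v⟩
  have hnorm (v : Λ) : ‖f.restrict (s v)‖ ≤ ‖(f.comp (.addRight (v : E))).restrict K‖ := by
    rw [ContinuousMap.norm_le _ (norm_nonneg _)]
    rintro ⟨_, y, hy, rfl⟩
    refine le_of_eq_of_le ?_ (ContinuousMap.norm_coe_le_norm _ (⟨y, hy⟩ : K))
    exact congr(‖f $(add_comm _ _)‖)
  have hμ (v : Λ) : μ.real (s v) = μ.real K := by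
    simp only [s, Compacts.coe_mk, measureReal_def, measure_vadd]
  refine integrable_of_summable_norm_restrict (s := s) ?_ hK
  simp only [hμ]
  exact (Summable.of_nonneg_of_le (fun _ ↦ norm_nonneg _) hnorm (hf K)).mul_right _

end Unfolding

section Periodization

variable {X Y : Type*} [AddCommGroup X] [TopologicalSpace X] [ContinuousAdd X] [AddCommMonoid Y]
  [TopologicalSpace Y] [ContinuousAdd Y] (Λ : Submodule ℤ X)

/-- The periodization `x ↦ ∑' v : Λ, f (x + v)` of `f`, summed in the topology of locally uniform
convergence (so that it is `0` if the sum does not converge there). -/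
def periodization (f : C(X, Y)) : C(X, Y) :=
  ∑' v : Λ, f.comp (.addRight (v : X))

variable [T2Space Y] {Λ}

lemma periodization_apply {f : C(X, Y)} (hf : Summable fun v : Λ ↦ f.comp (.addRight (v : X)))
    (x : X) : periodization Λ f x = ∑' v : Λ, f (x + v) :=
  (ContinuousMap.tsum_apply hf x).symm

lemma periodization_add (f : C(X, Y)) (x : X) (u : Λ) :
    periodization Λ f (x + u) = periodization Λ f x := by
  by_cases hf : Summable fun v : Λ ↦ f.comp (.addRight (v : X))
  · rw [periodization_apply hf, periodization_apply hf,
      ← (Equiv.addLeft u).tsum_eq fun v : Λ ↦ f (x + v)]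
    simp [add_assoc]
  · simp [periodization, tsum_eq_zero_of_not_summable hf]

end Periodization

section Torus

variable {E ι : Type*} [NormedAddCommGroup E] [NormedSpace ℝ E] [Fintype ι] (b : Basis ι ℝ E)

/-- The covering map `E → (ℝ/ℤ)^ι` that reduces the coordinates with respect to the basis `b`
modulo `1`; it identifies the torus with the quotient of `E` by the lattice spanned by `b`. -/
def toUnitAddTorus : C(E, UnitAddTorus ι) where
  toFun x i := (b.repr x i : UnitAddCircle)
  continuous_toFun := by
    have := b.finiteDimensional_of_finite
    exact continuous_pi fun i ↦ (AddCircle.continuous_mk' 1).comp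
      ((b.coord i).continuous_of_finiteDimensional)

lemma toUnitAddTorus_apply (x : E) (i : ι) :
    toUnitAddTorus b x i = (b.repr x i : UnitAddCircle) := rfl

lemma isOpenQuotientMap_toUnitAddTorus : IsOpenQuotientMap (toUnitAddTorus b) := by
  have := b.finiteDimensional_of_finite
  exact (IsOpenQuotientMap.piMap fun _ : ι ↦ QuotientAddGroup.isOpenQuotientMap_mk).comp
    b.equivFunL.toHomeomorph.isOpenQuotientMap

lemma toUnitAddTorus_eq_iff {x y : E} :
    toUnitAddTorus b x = toUnitAddTorus b y ↔ x - y ∈ Submodule.span ℤ (Set.range b) := by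
  simp only [funext_iff, toUnitAddTorus_apply, b.mem_span_iff_repr_mem ℤ, map_sub,
    Finsupp.sub_apply]
  refine forall_congr' fun i ↦ ?_
  rw [← sub_eq_zero, ← AddCircle.coe_sub, AddCircle.coe_eq_zero_iff]
  simp

lemma mFourier_toUnitAddTorus (n : ι → ℤ) (x : E) :
    UnitAddTorus.mFourier n (toUnitAddTorus b x) = 𝐞 (∑ i, n i * b.repr x i) := by
  simp only [UnitAddTorus.mFourier, ContinuousMap.coe_mk, toUnitAddTorus_apply,
    fourier_coe_apply, Real.fourierChar_apply, ← Complex.exp_sum]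
  congr 1
  push_cast
  simp only [Finset.mul_sum, Finset.sum_mul, div_one]
  exact Finset.sum_congr rfl fun i _ ↦ by ring

lemma setOf_Ioc_ae_eq_fundamentalDomain_basisFun :
    {x : ι → ℝ | ∀ i, x i ∈ Set.Ioc ((0 : ι → ℝ) i) ((0 : ι → ℝ) i + 1)} =ᵐ[volume]
      ZSpan.fundamentalDomain (Pi.basisFun ℝ ι) := by
  have hIoc := Measure.univ_pi_Ioc_ae_eq_Icc (μ := fun _ : ι ↦ (volume : Measure ℝ))
    (f := 0) (g := 1)
  have hIco := Measure.univ_pi_Ico_ae_eq_Icc (μ := fun _ : ι ↦ (volume : Measure ℝ))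
    (f := 0) (g := 1)
  have hpi : {x : ι → ℝ | ∀ i, x i ∈ Set.Ioc ((0 : ι → ℝ) i) ((0 : ι → ℝ) i + 1)} =
      Set.univ.pi fun i ↦ Set.Ioc ((0 : ι → ℝ) i) ((1 : ι → ℝ) i) := by
    ext x
    simp
  rw [ZSpan.fundamentalDomain_pi_basisFun]
  exact hpi ▸ hIoc.trans hIco.symm

end Torus

section FourierCoefficients

variable {E ι V : Type*} [NormedAddCommGroup E] [InnerProductSpace ℝ E] [FiniteDimensional ℝ E]
  [Fintype ι] [NormedAddCommGroup V]
  {Λ : Submodule ℤ E} [DiscreteTopology Λ] [IsZLattice ℝ Λ] (b : Basis ι ℤ Λ)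

lemma toUnitAddTorus_add (x : E) (v : Λ) :
    toUnitAddTorus (b.ofZLatticeBasis ℝ Λ) (x + v) =
      toUnitAddTorus (b.ofZLatticeBasis ℝ Λ) x := by
  rw [toUnitAddTorus_eq_iff, b.ofZLatticeBasis_span ℝ, add_sub_cancel_left]
  exact v.2

lemma mFourier_repr_toUnitAddTorus [DecidableEq ι] (w : dualLattice Λ) (x : E) :
    UnitAddTorus.mFourier ((dualLatticeBasis b).repr w)
      (toUnitAddTorus (b.ofZLatticeBasis ℝ Λ) x) = 𝐞 ⟪(w : E), x⟫ := by
  rw [mFourier_toUnitAddTorus, inner_eq_sum_repr_mul_repr b]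

lemma periodization_factorsThrough_toUnitAddTorus (f : C(E, V)) :
    (periodization Λ f : E → V).FactorsThrough (toUnitAddTorus (b.ofZLatticeBasis ℝ Λ)) := by
  intro x y hxy
  rw [toUnitAddTorus_eq_iff, b.ofZLatticeBasis_span ℝ] at hxy
  simpa using periodization_add f y ⟨x - y, hxy⟩

/-- The function on the torus induced by the periodization of `f`, where the torus is identified
with `E ⧸ Λ` through the basis `b`. -/
def torusPeriodization (f : C(E, V)) : C(UnitAddTorus ι, V) :=
  (isOpenQuotientMap_toUnitAddTorus (b.ofZLatticeBasis ℝ Λ)).isQuotientMap.lift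
    (periodization Λ f) (periodization_factorsThrough_toUnitAddTorus b f)

lemma torusPeriodization_toUnitAddTorus (f : C(E, V)) (x : E) :
    torusPeriodization b f (toUnitAddTorus (b.ofZLatticeBasis ℝ Λ) x) = periodization Λ f x :=
  DFunLike.congr_fun (Topology.IsQuotientMap.lift_comp
    (isOpenQuotientMap_toUnitAddTorus (b.ofZLatticeBasis ℝ Λ)).isQuotientMap (periodization Λ f)
    (periodization_factorsThrough_toUnitAddTorus b f)) x

variable [MeasurableSpace E] [BorelSpace E]

lemma measurePreserving_equivFunL_symm :
    MeasurePreserving (b.ofZLatticeBasis ℝ Λ).equivFunL.symm volume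
      ((ENNReal.ofReal (ZLattice.covolume Λ))⁻¹ • volume) := by
  have hmeas := (b.ofZLatticeBasis ℝ Λ).equivFunL.symm.continuous.measurable
  refine ⟨hmeas, Measure.ext fun s hs ↦ ?_⟩
  rw [Measure.map_apply hmeas hs, ← ContinuousLinearEquiv.image_eq_preimage_symm,
    Measure.smul_apply, smul_eq_mul, ← ENNReal.div_eq_inv_mul]
  exact ZLattice.volume_image_eq_volume_div_covolume' Λ b hs.nullMeasurableSet

variable [NormedSpace ℂ V]

lemma mFourierCoeff_eq_setIntegral_fundamentalDomain (G : UnitAddTorus ι → V) (n : ι → ℤ) :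
    UnitAddTorus.mFourierCoeff G n = (ZLattice.covolume Λ)⁻¹ •
      ∫ x in ZSpan.fundamentalDomain (b.ofZLatticeBasis ℝ Λ),
        UnitAddTorus.mFourier (-n) (toUnitAddTorus (b.ofZLatticeBasis ℝ Λ) x) •
          G (toUnitAddTorus (b.ofZLatticeBasis ℝ Λ) x) := by
  have hpres := measurePreserving_equivFunL_symm b
  set bR := b.ofZLatticeBasis ℝ Λ
  have hrepr (x : ι → ℝ) (i : ι) : bR.repr (bR.equivFunL.symm x) i = x i := by
    rw [← bR.equivFunL_apply, ContinuousLinearEquiv.apply_symm_apply]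
  have hpreimage : bR.equivFunL.symm ⁻¹' ZSpan.fundamentalDomain bR =
      ZSpan.fundamentalDomain (Pi.basisFun ℝ ι) := by
    ext x
    simp [ZSpan.mem_fundamentalDomain, hrepr]
  have hcovol : (ZLattice.covolume Λ)⁻¹ = (ENNReal.ofReal (ZLattice.covolume Λ))⁻¹.toReal := by
    rw [ENNReal.toReal_inv, ENNReal.toReal_ofReal (ZLattice.covolume_pos Λ volume).le]
  rw [UnitAddTorus.mFourierCoeff_eq_integral G n 0,
    setIntegral_congr_set setOf_Ioc_ae_eq_fundamentalDomain_basisFun, hcovol,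
    ← integral_smul_measure, ← Measure.restrict_smul, ← hpres.setIntegral_preimage_emb
      bR.equivFunL.symm.toHomeomorph.measurableEmbedding, hpreimage]
  simp only [toUnitAddTorus, ContinuousMap.coe_mk, hrepr]

lemma mFourierCoeff_torusPeriodization [DecidableEq ι] [CompleteSpace V] {f : C(E, V)}
    (hf : ∀ K : Compacts E, Summable fun v : Λ ↦ ‖(f.comp (.addRight (v : E))).restrict K‖)
    (w : dualLattice Λ) :
    UnitAddTorus.mFourierCoeff (torusPeriodization b f) ((dualLatticeBasis b).repr w) =
      (ZLattice.covolume Λ)⁻¹ • 𝓕 (f : E → V) w := by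
  let χ (x : E) : ℂ := UnitAddTorus.mFourier (-⇑((dualLatticeBasis b).repr w))
    (toUnitAddTorus (b.ofZLatticeBasis ℝ Λ) x)
  have hχ (x : E) : χ x = 𝐞 (-⟪x, (w : E)⟫) := by
    rw [real_inner_comm, ← inner_neg_left]
    simpa using mFourier_repr_toUnitAddTorus b (-w) x
  have hχ_add (x : E) (v : Λ) : χ (x + v) = χ x := by
    simp only [χ, toUnitAddTorus_add]
  have hχf : Integrable fun x ↦ χ x • f x := by
    simp only [hχ, ← Circle.smul_def]
    exact (Real.fourierIntegral_convergent_iff (w : E)).mpr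
      (integrable_of_summable_norm_restrict_comp_addRight Λ volume hf)
  rw [mFourierCoeff_eq_setIntegral_fundamentalDomain b, Real.fourier_eq]
  congr 1
  calc ∫ x in ZSpan.fundamentalDomain (b.ofZLatticeBasis ℝ Λ), χ x •
        torusPeriodization b f (toUnitAddTorus (b.ofZLatticeBasis ℝ Λ) x)
    _ = ∫ x in ZSpan.fundamentalDomain (b.ofZLatticeBasis ℝ Λ),
          ∑' v : Λ, χ (v +ᵥ x) • f (v +ᵥ x) := by
      congr with x
      rw [torusPeriodization_toUnitAddTorus,
        periodization_apply (ContinuousMap.summable_of_locally_summable_norm hf),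
        ← tsum_const_smul'']
      simp only [Submodule.vadd_def, vadd_eq_add, add_comm _ x, hχ_add]
    _ = ∫ x, χ x • f x :=
      setIntegral_tsum_vadd (ZLattice.isAddFundamentalDomain b volume) hχf
    _ = ∫ x, 𝐞 (-⟪x, (w : E)⟫) • f x := by simp only [hχ, Circle.smul_def]

end FourierCoefficients

section PoissonSummation

variable {E : Type*} [NormedAddCommGroup E] [InnerProductSpace ℝ E] [FiniteDimensional ℝ E]
  [MeasurableSpace E] [BorelSpace E] {Λ : Submodule ℤ E} [DiscreteTopology Λ] [IsZLattice ℝ Λ]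

theorem tsum_add_eq_tsum_fourier_dualLattice {f : C(E, ℂ)}
    (h_norm : ∀ K : Compacts E, Summable fun v : Λ ↦ ‖(f.comp (.addRight (v : E))).restrict K‖)
    (h_sum : Summable fun w : dualLattice Λ ↦ 𝓕 (f : E → ℂ) w) (x : E) :
    ∑' v : Λ, f (x + v) =
      (ZLattice.covolume Λ)⁻¹ • ∑' w : dualLattice Λ, 𝐞 ⟪(w : E), x⟫ * 𝓕 (f : E → ℂ) w := by
  classical
  let b := Free.chooseBasis ℤ Λ
  let coords := (dualLatticeBasis b).equivFun.toEquiv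
  have hcoeff (w : dualLattice Λ) :
      UnitAddTorus.mFourierCoeff (torusPeriodization b f) (coords w) =
        (ZLattice.covolume Λ)⁻¹ • 𝓕 (f : E → ℂ) w := mFourierCoeff_torusPeriodization b h_norm w
  have hsummable : Summable (UnitAddTorus.mFourierCoeff (torusPeriodization b f)) := by
    rw [← coords.summable_iff]
    exact (h_sum.const_smul _).congr fun w ↦ (hcoeff w).symm
  calc ∑' v : Λ, f (x + v)
    _ = torusPeriodization b f (toUnitAddTorus (b.ofZLatticeBasis ℝ Λ) x) := by
      rw [torusPeriodization_toUnitAddTorus,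
        periodization_apply (ContinuousMap.summable_of_locally_summable_norm h_norm)]
    _ = ∑' w : dualLattice Λ, UnitAddTorus.mFourierCoeff (torusPeriodization b f) (coords w) •
          UnitAddTorus.mFourier (coords w) (toUnitAddTorus (b.ofZLatticeBasis ℝ Λ) x) := by
      rw [← (UnitAddTorus.hasSum_mFourier_series_apply_of_summable hsummable _).tsum_eq,
        ← coords.tsum_eq]
    _ = _ := by
      rw [← tsum_const_smul'']
      refine tsum_congr fun w ↦ ?_
      have hchar : UnitAddTorus.mFourier (coords w)
          (toUnitAddTorus (b.ofZLatticeBasis ℝ Λ) x) = 𝐞 ⟪(w : E), x⟫ :=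
        mFourier_repr_toUnitAddTorus b w x
      rw [hcoeff, hchar, smul_eq_mul, smul_mul_assoc, mul_comm]

lemma fourier_comp_inv_smul {V : Type*} [NormedAddCommGroup V] [NormedSpace ℂ V] (f : E → V)
    {B : ℝ} (hB : B ≠ 0) (w : E) :
    𝓕 (fun x ↦ f (B⁻¹ • x)) w = |B| ^ finrank ℝ E • 𝓕 f (B • w) := by
  rw [Real.fourier_eq, Real.fourier_eq, ← abs_pow,
    ← Measure.integral_comp_inv_smul volume (fun x ↦ 𝐞 (-⟪x, B • w⟫) • f x) B]
  simp only [inner_smul_left, inner_smul_right, RCLike.conj_to_real, mul_inv_cancel_left₀ hB]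

lemma e_eq_fourierChar (t : ℝ) : e t = 𝐞 t := by
  rw [e, Real.fourierChar_apply]
  push_cast
  ring_nf

lemma integral_mul_e_neg_inner (f : E → ℂ) (w : E) : ∫ y, f y * e (-⟪w, y⟫) = 𝓕 f w := by
  simp only [Real.fourier_eq, e_eq_fourierChar, Circle.smul_def, smul_eq_mul, real_inner_comm,
    mul_comm]

variable (Λ)

theorem poisson_summation_shifted_lattice_general {f : E → ℂ} {r : ℝ} (hr : finrank ℝ E < r)
    (hf : Continuous f) (hf_decay : f =O[cocompact E] (‖·‖ ^ (-r)))
    (hFf_decay : 𝓕 f =O[cocompact E] (‖·‖ ^ (-r))) {B : ℝ} (hB : B ≠ 0) (a : E) :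
    ∑' y : {y : E // y - a ∈ Λ}, f (B⁻¹ • (y : E)) =
      ((|B| ^ finrank ℝ E / ZLattice.covolume Λ volume : ℝ) : ℂ) *
        ∑' x : {x : E // ∀ y ∈ Λ, ∃ m : ℤ, ⟪x, y⟫ = (m : ℝ)},
          e ⟪a, (x : E)⟫ * ∫ y : E, f y * e (-⟪B • (x : E), y⟫) := by
  let g : C(E, ℂ) := ⟨fun x ↦ f (B⁻¹ • x), hf.comp (continuous_const_smul _)⟩
  have hFg (w : E) : 𝓕 (g : E → ℂ) w = |B| ^ finrank ℝ E • 𝓕 f (B • w) :=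
    fourier_comp_inv_smul f hB w
  have hg_norm (K : Compacts E) :
      Summable fun v : Λ ↦ ‖(g.comp (.addRight (v : E))).restrict K‖ :=
    summable_comp_coe_of_isBigO Λ hr <| isBigO_norm_restrict_comp_addRight_cocompact g
      ((Nat.cast_nonneg _).trans_lt hr) (isBigO_comp_smul_cocompact (inv_ne_zero hB) hf_decay) K
  have hFg_sum : Summable fun w : dualLattice Λ ↦ 𝓕 (g : E → ℂ) w := by
    simp only [hFg]
    exact (summable_comp_coe_of_isBigO (dualLattice Λ) hr
      (isBigO_comp_smul_cocompact hB hFf_decay)).const_smul _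
  let shift : Λ ≃ {y : E // y - a ∈ Λ} :=
    (Equiv.addLeft a).subtypeEquiv fun v ↦ by simp
  calc ∑' y : {y : E // y - a ∈ Λ}, f (B⁻¹ • (y : E))
    _ = ∑' v : Λ, g (a + v) := by
      rw [← shift.tsum_eq]
      rfl
    _ = (ZLattice.covolume Λ)⁻¹ • ∑' w : dualLattice Λ, 𝐞 ⟪(w : E), a⟫ * 𝓕 (g : E → ℂ) w :=
      tsum_add_eq_tsum_fourier_dualLattice hg_norm hFg_sum a
    _ = _ := by
      rw [← (Equiv.subtypeEquivRight fun _ ↦ mem_dualLattice).tsum_eq, ← tsum_const_smul'',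
        ← tsum_mul_left]
      refine tsum_congr fun w ↦ ?_
      rw [integral_mul_e_neg_inner, hFg, e_eq_fourierChar, real_inner_comm]
      simp only [Complex.real_smul, Equiv.subtypeEquivRight_apply_coe]
      push_cast
      ring

end PoissonSummation

/-- **Poisson summation for shifted lattices** (Proposition 3/4 of the paper).
Let `f : ℝ^d → ℂ` be a smooth function of rapid decay (a Schwartz function), `Λ` a full-rank
lattice in `ℝ^d`, `B > 0` and `a ∈ ℝ^d`. Then
`∑_{y ∈ a + Λ} f(y/B) = (B^d / Vol(ℝ^d/Λ)) ∑_{x ∈ Λ'} e(a·x) f̂(Bx)`,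
where `Λ' = {x : x·y ∈ ℤ for all y ∈ Λ}` is the dual lattice and
`f̂(x) = ∫ f(y) e(-x·y) dy`. -/
theorem poisson_summation_shifted_lattice
    (d : ℕ) (Λ : Submodule ℤ (EuclideanSpace ℝ (Fin d)))
    [DiscreteTopology Λ] [IsZLattice ℝ Λ]
    (f : SchwartzMap (EuclideanSpace ℝ (Fin d)) ℂ)
    (B : ℝ) (hB : 0 < B) (a : EuclideanSpace ℝ (Fin d)) :
    ∑' y : {y : EuclideanSpace ℝ (Fin d) // y - a ∈ Λ}, f (B⁻¹ • (y : EuclideanSpace ℝ (Fin d)))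
      = ((B ^ d / ZLattice.covolume Λ volume : ℝ) : ℂ) *
        ∑' x : {x : EuclideanSpace ℝ (Fin d) //
            ∀ y ∈ Λ, ∃ m : ℤ, ⟪(x : EuclideanSpace ℝ (Fin d)), y⟫ = (m : ℝ)},
          e ⟪a, (x : EuclideanSpace ℝ (Fin d))⟫ *
            ∫ y : EuclideanSpace ℝ (Fin d),
              f y * e (-⟪B • (x : EuclideanSpace ℝ (Fin d)), y⟫) := by
  simpa only [finrank_euclideanSpace_fin, abs_of_pos hB] using
    poisson_summation_shifted_lattice_general Λ (lt_add_one _) f.continuous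
      (f.isBigO_cocompact_rpow _) ((𝓕 f).isBigO_cocompact_rpow _) hB.ne' a
end
end

section
/- Let d ≥ 1, let N ∈ ℕ with N ≥ 1, and define φ : ℝ^d → ℝ by φ(x) := ∏_{k=1}^d (sin(π x_k)/(2 x_k))², with the factor interpreted as (π/2)² when x_k = 0. Then for every y ∈ ℝ^d, ∑_{n∈ℤ^d} φ(n/(2N^{1/d})) · e(n·y) = (π^{2d}/2^d) · N · ∏_{k=1}^d max{1 − 2N^{1/d}·‖y_k‖, 0}, where ‖u‖ denotes the distance from u ∈ ℝ to the nearest integer. -/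
noncomputable section

/-- The Fejér-type factor `(sin(πt)/(2t))²`, interpreted as its limit `(π/2)²` at `t = 0`. -/
def fej (t : ℝ) : ℝ := if t = 0 then (Real.pi / 2) ^ 2 else (Real.sin (Real.pi * t) / (2 * t)) ^ 2

/-- The function `φ(x) = ∏_{k=1}^d (sin(π x_k)/(2 x_k))²` on `ℝ^d`. -/
def phi {d : ℕ} (x : Fin d → ℝ) : ℝ := ∏ k, fej (x k)

/-- The distance from a real number to the nearest integer. -/
def distInt (u : ℝ) : ℝ := |u - round u|

/-!
Up to sign, `4 sin² (π t)` times a character is the second difference of that character with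
step `t`. Since `fej t` is `sin² (π t) / (4 t²)` away from `0`, the one-dimensional sum is therefore
a second difference of `∑ e (n x) / n²`, which on `[-1, 1]` is a quadratic polynomial minus a
multiple of `|x|`. The second difference of the quadratic part cancels the term `n = 0`, and that
of `|x|` is a tent. In dimension `d` the sum converges absolutely and factors over the coordinates.
-/

open Real

lemma e_add (s t : ℝ) : e (s + t) = e s * e t := by
  simp only [e, Complex.ofReal_add, mul_add, Complex.exp_add]

lemma e_intCast (m : ℤ) : e m = 1 := by
  rw [e, mul_comm]
  exact_mod_cast Complex.exp_int_mul_two_pi_mul_I m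

lemma e_sum {ι : Type*} (s : Finset ι) (t : ι → ℝ) : e (∑ k ∈ s, t k) = ∏ k ∈ s, e (t k) := by
  simp only [e, Complex.ofReal_sum, Finset.mul_sum, Complex.exp_sum]

lemma e_intCast_mul_sub_intCast (n m : ℤ) (y : ℝ) : e (n * (y - m)) = e (n * y) := by
  have h : (n : ℝ) * y = n * (y - m) + (n * m : ℤ) := by push_cast; ring
  rw [h, e_add, e_intCast, mul_one]

lemma e_add_e_neg (t : ℝ) : e t + e (-t) = ((2 * cos (2 * π * t) : ℝ) : ℂ) := by
  push_cast
  rw [Complex.two_cos, e, e]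
  push_cast
  ring_nf

lemma four_mul_sin_sq_mul_e (t u : ℝ) :
    ((4 * sin (π * t) ^ 2 : ℝ) : ℂ) * e u = 2 * e u - (e (u + t) + e (u - t)) := by
  have h : 4 * sin (π * t) ^ 2 = 2 - 2 * cos (2 * π * t) := by
    rw [sin_sq_eq_half_sub, mul_assoc 2 π t]
    ring
  rw [h, Complex.ofReal_sub, ← e_add_e_neg, sub_eq_add_neg u t, e_add, e_add]
  push_cast
  ring

/-- Here and below, the term `n = 0` of a series with denominators `n ^ 2` is `0`, by the
convention `z / 0 = 0`. -/
lemma hasSum_e_div_sq {x : ℝ} (hx : |x| ≤ 1) :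
    HasSum (fun n : ℤ => e (n * x) / (n : ℂ) ^ 2)
      ((2 * π ^ 2 * (x ^ 2 - |x| + 1 / 6) : ℝ) : ℂ) := by
  have hasSum_of_nonneg {x : ℝ} (hx : x ∈ Set.Icc (0 : ℝ) 1) :
      HasSum (fun n : ℤ => e (n * x) / (n : ℂ) ^ 2)
        ((2 * π ^ 2 * (x ^ 2 - x + 1 / 6) : ℝ) : ℂ) := by
    convert! hasSum_one_div_pow_mul_fourier_mul_bernoulliFun le_rfl hx using 1
    · ext n
      rw [fourier_coe_apply, e, div_eq_inv_mul, one_div]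
      push_cast
      ring_nf
    · rw [bernoulliFun_two, mul_pow, Complex.I_sq, Nat.factorial_two]
      push_cast
      ring
  rcases le_total 0 x with h | h
  · rw [abs_of_nonneg h] at hx ⊢
    exact hasSum_of_nonneg ⟨h, hx⟩
  · rw [abs_of_nonpos h] at hx ⊢
    rw [← (Equiv.neg ℤ).hasSum_iff]
    simpa [Function.comp_def] using hasSum_of_nonneg ⟨neg_nonneg.2 h, hx⟩

lemma abs_add_add_abs_sub {α : Type*} [CommRing α] [LinearOrder α] [IsStrictOrderedRing α]
    (a b : α) : |a + b| + |a - b| = 2 * max |a| |b| := by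
  grind

lemma hasSum_sin_sq_div_sq_mul_e {r t : ℝ} (h : |r| + |t| ≤ 1) :
    HasSum (fun n : ℤ => ((sin (π * (n * t)) ^ 2 / n ^ 2 : ℝ) : ℂ) * e (n * r))
      ((π ^ 2 * (max |r| |t| - |r| - t ^ 2) : ℝ) : ℂ) := by
  have center := hasSum_e_div_sq (x := r) (by linarith [abs_nonneg t])
  have right := hasSum_e_div_sq ((abs_add_le r t).trans h)
  have left := hasSum_e_div_sq ((abs_sub r t).trans h)
  convert! ((center.mul_left 2).sub (right.add left)).div_const 4 using 1
  · ext n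
    have hdiff := four_mul_sin_sq_mul_e (n * t) (n * r)
    rw [← mul_add, ← mul_sub] at hdiff
    push_cast at hdiff ⊢
    linear_combination hdiff / (4 * (n : ℂ) ^ 2)
  · norm_cast
    linear_combination (-π ^ 2 / 2) * abs_add_add_abs_sub r t

lemma fej_zero : fej 0 = π ^ 2 / 4 := by
  rw [fej, if_pos rfl]
  ring

lemma fej_of_ne_zero {t : ℝ} (ht : t ≠ 0) : fej t = sin (π * t) ^ 2 / (4 * t ^ 2) := by
  rw [fej, if_neg ht]
  ring

lemma fej_intCast_div {T : ℝ} (hT : T ≠ 0) (n : ℤ) :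
    fej (n / T) =
      (if n = 0 then π ^ 2 / 4 else 0) + T ^ 2 / 4 * (sin (π * (n * T⁻¹)) ^ 2 / n ^ 2) := by
  rcases eq_or_ne n 0 with rfl | hn
  · simp [fej_zero]
  · have hn' : (n : ℝ) ≠ 0 := Int.cast_ne_zero.2 hn
    rw [fej_of_ne_zero (div_ne_zero hn' hT), if_neg hn, div_eq_mul_inv (n : ℝ) T]
    field_simp
    ring

lemma hasSum_fej_div_mul_e {T : ℝ} (hT : 2 ≤ T) (y : ℝ) :
    HasSum (fun n : ℤ => (fej (n / T) : ℂ) * e (n * y))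
      ((π ^ 2 / 4 * T * max (1 - T * distInt y) 0 : ℝ) : ℂ) := by
  set r : ℝ := y - round y
  have hT0 : 0 < T := by linarith
  have hrT : |r| + |T⁻¹| ≤ 1 := by
    have hr : |r| ≤ 1 / 2 := abs_sub_round y
    have hT' : T⁻¹ ≤ 2⁻¹ := inv_anti₀ two_pos hT
    rw [abs_of_pos (inv_pos.2 hT0)]
    linarith
  have zero_term := hasSum_ite_eq (0 : ℤ) ((π ^ 2 / 4 : ℝ) : ℂ)
  convert! zero_term.add ((hasSum_sin_sq_div_sq_mul_e hrT).mul_left ((T ^ 2 / 4 : ℝ) : ℂ)) using 1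
  · ext n
    rw [e_intCast_mul_sub_intCast, fej_intCast_div hT0.ne']
    rcases eq_or_ne n 0 with rfl | hn
    · simp [e]
    · simp [hn, mul_assoc]
  · have tent : max (1 - T * distInt y) 0 = T * (max |r| |T⁻¹| - |r|) := by
      rw [← max_sub_sub_right, sub_self, abs_of_pos (inv_pos.2 hT0), max_comm,
        mul_max_of_nonneg _ _ hT0.le, mul_zero, mul_sub, mul_inv_cancel₀ hT0.ne']
      rfl
    rw [tent]
    norm_cast
    field_simp
    ring

lemma summable_norm_and_hasSum_pi_prod {R ι : Type*} [NormedCommRing R] [Fintype ι]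
    {β : ι → Type*} {f : ∀ i, β i → R} {a : ι → R}
    (hf : ∀ i, Summable fun b => ‖f i b‖) (ha : ∀ i, HasSum (f i) (a i)) :
    (Summable fun x : ∀ i, β i => ‖∏ i, f i (x i)‖) ∧
      HasSum (fun x : ∀ i, β i => ∏ i, f i (x i)) (∏ i, a i) := by
  revert ι
  apply Fintype.induction_empty_option
  case of_equiv =>
    intro ι κ _ σ ih β f a hf ha
    let := Fintype.ofEquiv κ σ.symm
    rw [← (Equiv.piCongrLeft β σ).summable_iff, ← (Equiv.piCongrLeft β σ).hasSum_iff]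
    simpa only [Function.comp_def, ← σ.prod_comp, Equiv.piCongrLeft_apply_apply] using
      ih (fun i => hf (σ i)) (fun i => ha (σ i))
  case h_empty =>
    intro β f a _ _
    exact ⟨.of_finite, hasSum_unique _⟩
  case h_option =>
    intro ι _ ih β f a hf ha
    obtain ⟨summable_tail, hasSum_tail⟩ := ih (fun i => hf (some i)) (fun i => ha (some i))
    rw [← Equiv.piOptionEquivProd.symm.summable_iff, ← Equiv.piOptionEquivProd.symm.hasSum_iff]
    have prod_cons (x : β none × ∀ i, β (some i)) :
        ∏ i, f i (Equiv.piOptionEquivProd.symm x i) = f none x.1 * ∏ i, f (some i) (x.2 i) :=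
      Fintype.prod_option _
    simp only [Function.comp_def, prod_cons, Fintype.prod_option a]
    have summable_norm := (hf none).mul_norm summable_tail
    have summable_mul := summable_mul_of_summable_norm' (hf none) (ha none).summable
      summable_tail hasSum_tail.summable
    have hasSum_mul := (ha none).mul hasSum_tail summable_mul
    exact ⟨summable_norm, hasSum_mul⟩

lemma hasSum_phi_div_mul_e {d : ℕ} {T : Fin d → ℝ} (hT : ∀ k, 2 ≤ T k) (y : Fin d → ℝ) :
    HasSum (fun n : Fin d → ℤ => (phi (fun k => n k / T k) : ℂ) * e (∑ k, n k * y k))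
      ((∏ k, π ^ 2 / 4 * T k * max (1 - T k * distInt (y k)) 0 : ℝ) : ℂ) := by
  have factor (k : Fin d) := hasSum_fej_div_mul_e (hT k) (y k)
  simpa only [phi, e_sum, Complex.ofReal_prod, ← Finset.prod_mul_distrib] using
    (summable_norm_and_hasSum_pi_prod (fun k => (factor k).summable.norm) factor).2

theorem smoothed_exponential_sum_eval_general (d : ℕ) (hd : 1 ≤ d) (N : ℝ) (hN : 1 ≤ N)
    (y : Fin d → ℝ) :
    HasSum
      (fun n : Fin d → ℤ =>
        (phi (fun k => (n k : ℝ) / (2 * N ^ ((1 : ℝ) / d))) : ℂ) * e (∑ k, (n k : ℝ) * y k))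
      (((π ^ (2 * d) / 2 ^ d) * N *
        ∏ k, max (1 - 2 * N ^ ((1 : ℝ) / d) * distInt (y k)) 0 : ℝ) : ℂ) := by
  have hM : 1 ≤ N ^ ((1 : ℝ) / d) := one_le_rpow hN (by positivity)
  have hMd : (N ^ ((1 : ℝ) / d)) ^ d = N := by
    rw [one_div, rpow_inv_natCast_pow (by linarith) (by lia)]
  generalize N ^ ((1 : ℝ) / d) = M at hM hMd ⊢
  have hconst : ∏ _k : Fin d, π ^ 2 / 4 * (2 * M) = π ^ (2 * d) / 2 ^ d * N := by
    rw [Fin.prod_const, ← hMd, pow_mul, ← div_pow, ← mul_pow]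
    ring
  rw [← hconst, ← Finset.prod_mul_distrib]
  exact hasSum_phi_div_mul_e (fun _ => by linarith) y

/-- **Evaluation of the smoothed exponential sum `V(y)`** (Section 3 of the paper).
For every `y ∈ ℝ^d`,
`∑_{n ∈ ℤ^d} φ(n/(2N^{1/d})) e(n·y) = (π^{2d}/2^d) N ∏_k max{1 - 2N^{1/d}‖y_k‖, 0}`,
where `‖u‖` is the distance from `u` to the nearest integer. -/
theorem smoothed_exponential_sum_eval (d : ℕ) (hd : 1 ≤ d) (N : ℕ) (hN : 1 ≤ N)
    (y : Fin d → ℝ) :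
    ∑' n : Fin d → ℤ,
        (phi (fun k => (n k : ℝ) / (2 * (N : ℝ) ^ ((1 : ℝ) / d))) : ℂ)
          * e (∑ k, (n k : ℝ) * y k)
      = (((Real.pi ^ (2 * d) / 2 ^ d) * N *
          ∏ k, max (1 - 2 * (N : ℝ) ^ ((1 : ℝ) / d) * distInt (y k)) 0 : ℝ) : ℂ) := by
  exact_mod_cast (smoothed_exponential_sum_eval_general d hd N (mod_cast hN) y).tsum_eq
end
end

section
/- Let q1 ∈ ℤ[i] \ {0}, let r1, q2 ∈ ℤ[i], and let Q, N > 0 be real numbers. Then ∑_{b∈ℤ[i], b ≡ r1 q2 (mod q1)} exp(−π N(b) N/(2Q·N(q1))) = (2Q/N) · ∑_{j∈ℤ[i]} e(Re(j r1 q2 / q1)) · exp(−2π Q·N(j)/N). -/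
noncomputable section

/-!
Writing `b = q₁ (z + w)` with `w = r₁ q₂ / q₁`, the residue class becomes the translate `ℤ[i] + w`
of the full lattice, and `N(b) / N(q₁) = |z + w|²`. The Gaussian in `|z + w|²` splits as a product
over the real and imaginary coordinates, so Poisson summation over `ℤ[i] ≅ ℤ²` is the product of two
instances of the one-dimensional formula.
-/

section PoissonSummation

open Complex
open scoped Real

variable {a : ℂ}

lemma summable_cexp_neg_quadratic (ha : 0 < a.re) (b : ℂ) :
    Summable fun n : ℤ ↦ cexp (-π * a * n ^ 2 + 2 * π * b * n) := by
  have h := (summable_jacobiTheta₂_term_iff (-I * b) (I * a)).mpr (by simpa using ha)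
  refine h.congr fun n ↦ ?_
  rw [jacobiTheta₂_term]
  congr 1
  linear_combination (π * n ^ 2 * a - 2 * π * n * b) * I_sq

lemma summable_cexp_neg_div_mul_add_sq (ha : 0 < a.re) (u : ℂ) :
    Summable fun n : ℤ ↦ cexp (-π / a * (n + u) ^ 2) := by
  have ha_inv : 0 < a⁻¹.re := by
    rw [inv_re]
    exact div_pos ha (normSq_pos.mpr (ne_zero_of_re_pos ha))
  have h := (summable_cexp_neg_quadratic ha_inv (-a⁻¹ * u)).mul_left (cexp (-π / a * u ^ 2))
  refine h.congr fun n ↦ ?_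
  rw [← Complex.exp_add]
  ring_nf

lemma tsum_cexp_neg_div_mul_add_sq (ha : 0 < a.re) (u : ℂ) :
    ∑' n : ℤ, cexp (-π / a * (n + u) ^ 2) =
      a ^ (2⁻¹ : ℂ) * ∑' n : ℤ, cexp (-π * a * n ^ 2 + 2 * π * (I * u) * n) := by
  have ha_sqrt : a ^ (2⁻¹ : ℂ) ≠ 0 := by simp [cpow_eq_zero_iff, ne_zero_of_re_pos ha]
  rw [tsum_exp_neg_quadratic ha, one_div 2, one_div, mul_inv_cancel_left₀ ha_sqrt,
    ← (Equiv.neg ℤ).tsum_eq]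
  refine tsum_congr fun n ↦ ?_
  rw [← mul_assoc I, I_mul_I, Equiv.neg_apply]
  push_cast
  ring_nf

lemma tsum_int_prod_cexp_neg_div_mul_add_sq (ha : 0 < a.re) (u v : ℂ) :
    ∑' p : ℤ × ℤ, cexp (-π / a * ((p.1 + u) ^ 2 + (p.2 + v) ^ 2)) =
      a * ∑' p : ℤ × ℤ,
        cexp (-π * a * (p.1 ^ 2 + p.2 ^ 2) + 2 * π * I * (p.1 * u + p.2 * v)) := by
  calc
    _ = (∑' m : ℤ, cexp (-π / a * (m + u) ^ 2)) * ∑' n : ℤ, cexp (-π / a * (n + v) ^ 2) := by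
      rw [tsum_mul_tsum_of_summable_norm (summable_cexp_neg_div_mul_add_sq ha u).norm
        (summable_cexp_neg_div_mul_add_sq ha v).norm]
      simp only [mul_add, Complex.exp_add]
    _ = (a ^ (2⁻¹ : ℂ)) ^ 2 * ((∑' m : ℤ, cexp (-π * a * m ^ 2 + 2 * π * (I * u) * m)) *
          ∑' n : ℤ, cexp (-π * a * n ^ 2 + 2 * π * (I * v) * n)) := by
      rw [tsum_cexp_neg_div_mul_add_sq ha, tsum_cexp_neg_div_mul_add_sq ha]
      ring
    _ = _ := by
      rw [cpow_ofNat_inv_pow, tsum_mul_tsum_of_summable_norm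
        (summable_cexp_neg_quadratic ha _).norm (summable_cexp_neg_quadratic ha _).norm]
      congr 1
      refine tsum_congr fun p ↦ ?_
      rw [← Complex.exp_add]
      ring_nf

/-- The identification of `ℤ × ℤ` with the Gaussian integers, `(m, n) ↦ m + n i`, which turns sums
over `ℤ[i]` into double sums over `ℤ`. -/
def intProdEquivGaussianInt : ℤ × ℤ ≃ GaussianInt where
  toFun p := ⟨p.1, p.2⟩
  invFun z := (z.re, z.im)
  left_inv _ := rfl
  right_inv _ := rfl

lemma gN_eq_normSq (z : GaussianInt) : gN z = normSq (z : ℂ) := by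
  simp [gN, normSq_apply, sq]

lemma tsum_gaussianInt_cexp_neg_div_mul_normSq_add (ha : 0 < a.re) (w : ℂ) :
    ∑' z : GaussianInt, cexp (-π / a * normSq (z + w)) =
      a * ∑' j : GaussianInt, e ((j * w).re) * cexp (-π * a * gN j) := by
  -- In coordinates, Poisson summation pairs `j` with `w` through `Re (j * conj w)`; conjugating the
  -- summation variable on the left turns this into the `Re (j * w)` of the statement.
  calc
    _ = ∑' p : ℤ × ℤ, cexp (-π / a * ((p.1 + (w.re : ℂ)) ^ 2 + (p.2 + -(w.im : ℂ)) ^ 2)) := by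
      rw [← (intProdEquivGaussianInt.trans starAddEquiv.toEquiv).tsum_eq]
      refine tsum_congr fun p ↦ ?_
      have h_normSq : normSq ((star (intProdEquivGaussianInt p) : GaussianInt) + w) =
          (p.1 + w.re) ^ 2 + (p.2 + -w.im) ^ 2 := by
        simp only [intProdEquivGaussianInt, Equiv.coe_fn_mk, Zsqrtd.star_mk, normSq_apply, add_re,
          add_im, GaussianInt.re_toComplex, GaussianInt.im_toComplex, Int.cast_neg]
        ring
      change cexp (-π / a * normSq ((star (intProdEquivGaussianInt p) : GaussianInt) + w)) = _
      rw [h_normSq]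
      push_cast
      rfl
    _ = _ := by
      rw [tsum_int_prod_cexp_neg_div_mul_add_sq ha, ← intProdEquivGaussianInt.tsum_eq]
      congr 1
      refine tsum_congr fun p ↦ ?_
      have h_re : ((intProdEquivGaussianInt p : ℂ) * w).re = p.1 * w.re - p.2 * w.im := by
        simp [intProdEquivGaussianInt]
      have h_gN : gN (intProdEquivGaussianInt p) = (p.1 : ℝ) ^ 2 + (p.2 : ℝ) ^ 2 := rfl
      rw [e, ← Complex.exp_add, h_re, h_gN]
      push_cast
      ring_nf

end PoissonSummation

/-- The parametrization `c ↦ q c + s` of the residue class of `s` modulo `q`, bijective when `q` is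
not a left zero divisor. -/
def residueClassEquiv {R : Type*} [Ring R] {q : R} (hq : IsLeftRegular q) (s : R) :
    R ≃ {b : R // q ∣ b - s} :=
  Equiv.ofBijective (fun c ↦ ⟨q * c + s, by simp⟩)
    ⟨fun c d h ↦ hq (by simpa using h),
      fun ⟨b, c, hc⟩ ↦ ⟨c, Subtype.ext (by simp [← hc])⟩⟩

lemma gN_mul_add_div_gN {q : GaussianInt} (hq : q ≠ 0) (c s : GaussianInt) :
    gN (q * c + s) / gN q = Complex.normSq (c + (s : ℂ) / (q : ℂ)) := by
  have hq_toComplex : (q : ℂ) ≠ 0 := by simpa using hq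
  rw [gN_eq_normSq, gN_eq_normSq, ← Complex.normSq_div, map_add, map_mul, add_div,
    mul_div_cancel_left₀ _ hq_toComplex]

theorem poisson_gaussian_residue_class_general {a : ℂ} (ha : 0 < a.re)
    {q : GaussianInt} (hq : q ≠ 0) (s : GaussianInt) :
    ∑' b : {b : GaussianInt // q ∣ b - s},
        Complex.exp (-Real.pi / a * (gN (b : GaussianInt) / gN q : ℝ)) =
      a * ∑' j : GaussianInt,
        e (((j : ℂ) * (s : ℂ) / (q : ℂ)).re) * Complex.exp (-Real.pi * a * gN j) := by
  simp only [mul_div_assoc]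
  rw [← tsum_gaussianInt_cexp_neg_div_mul_normSq_add ha,
    ← (residueClassEquiv (IsLeftCancelMulZero.mul_left_cancel_of_ne_zero hq) s).tsum_eq]
  refine tsum_congr fun c ↦ ?_
  rw [← gN_mul_add_div_gN hq]
  rfl

/-- **Poisson summation for the Gaussian weight over a residue class** (identity (15) of
the paper). For `q₁ ≠ 0`, `r₁, q₂ ∈ ℤ[i]` and `Q, N > 0`,
`∑_{b ≡ r₁q₂ (mod q₁)} exp(-π N(b) N/(2Q N(q₁)))
  = (2Q/N) ∑_{j ∈ ℤ[i]} e(Re(j r₁ q₂/q₁)) exp(-2π Q N(j)/N)`. -/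
theorem poisson_gaussian_residue_class
    (q1 : GaussianInt) (hq1 : q1 ≠ 0) (r1 q2 : GaussianInt)
    (Q N : ℝ) (hQ : 0 < Q) (hN : 0 < N) :
    ((∑' b : {b : GaussianInt // q1 ∣ b - r1 * q2},
        Real.exp (-Real.pi * gN (b : GaussianInt) * N / (2 * Q * gN q1)) : ℝ) : ℂ)
      = ((2 * Q / N : ℝ) : ℂ) *
        ∑' j : GaussianInt,
          e ((((j : ℂ) * (r1 : ℂ) * (q2 : ℂ)) / (q1 : ℂ)).re) *
            ((Real.exp (-(2 * Real.pi) * Q * gN j / N) : ℝ) : ℂ) := by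
  have hwidth : 0 < ((2 * Q / N : ℝ) : ℂ).re := by
    rw [Complex.ofReal_re]
    positivity
  simp only [Complex.ofReal_tsum, Complex.ofReal_exp]
  convert poisson_gaussian_residue_class_general hwidth hq1 (r1 * q2) using 6
  · push_cast
    field_simp
  · rw [map_mul, mul_assoc]
  · push_cast
    ring
end
end

section
/- Let Q0 > 0, let q1 ∈ ℤ[i] \ {0}, and let r1, j ∈ ℤ[i]. Set S(q1,r1,j) := ∑_{q∈ℤ[i]} exp(−π N(q)/(2Q0)) · e(Re(j r1 q² / q1²)). Then |S(q1,r1,j)|² ≤ Q0 · ∑_{α∈ℤ[i]} exp(−π N(α)/(4Q0)) · ∑_{β∈ℤ[i]} exp(−π Q0 · N(β − conj(2 j α r1 / q1²))), where conj denotes complex conjugation. -/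
/-!
Write `S = ∑_q f(q)`. Substituting `p = q + α` in `|S|² = ∑_{p,q} f(p) conj f(q)` gives the sum over
`α` of `∑_q f(q + α) conj f(q)`. Since `(q + α)² - q² = 2α(q + α/2)` and, by the parallelogram law,
`N(q + α) + N(q) = 2N(q + α/2) + N(α)/2`, the inner sum is `exp(-π N(α)/(4Q₀))` times a sum of a
shifted Gaussian with a *linear* phase. Such a Gaussian factors over the two coordinates of `ℤ[i]`,
so the functional equation of Jacobi's theta function transforms the `q`-sum into `Q₀` times a sum
over `β` of the dual Gaussian centred at the conjugate frequency, up to phases that the triangle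
inequality removes. The same bound at frequency `0` shows that the `β`-sums are bounded uniformly in
their centre, which makes the sum over `α` converge.
-/

noncomputable section

/-- The norm form on `ℂ`: `N(z) = (Re z)² + (Im z)²`. -/
def cN (z : ℂ) : ℝ := z.re ^ 2 + z.im ^ 2

/-- The smoothed quadratic Gauss-type sum
`S(q₁,r₁,j) = ∑_{q ∈ ℤ[i]} exp(-π N(q)/(2Q₀)) e(Re(j r₁ q²/q₁²))`. -/
def Ssum (Q0 : ℝ) (q1 r1 j : GaussianInt) : ℂ :=
  ∑' q : GaussianInt,
    ((Real.exp (-Real.pi * gN q / (2 * Q0)) : ℝ) : ℂ)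
      * e (((j : ℂ) * (r1 : ℂ) * (q : ℂ) ^ 2 / (q1 : ℂ) ^ 2).re)

section Correlation

open scoped ComplexConjugate

lemma tsum_mul_tsum_eq_tsum_tsum_add {G R : Type*} [AddGroup G] [NormedRing R] [CompleteSpace R]
    {f g : G → R} (hf : Summable fun x ↦ ‖f x‖) (hg : Summable fun x ↦ ‖g x‖) :
    (∑' x, f x) * ∑' x, g x = ∑' a, ∑' x, f (x + a) * g x := by
  let shear : G × G ≃ G × G := ((Equiv.refl G).prodShear Equiv.addLeft).trans (Equiv.prodComm G G)
  have hfg : Summable fun p : G × G ↦ f (p.1 + p.2) * g p.1 :=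
    shear.summable_iff.mpr (summable_mul_of_summable_norm hf hg)
  calc (∑' x, f x) * ∑' x, g x = ∑' p : G × G, f p.1 * g p.2 :=
        tsum_mul_tsum_of_summable_norm hf hg
    _ = ∑' p : G × G, f (p.1 + p.2) * g p.1 :=
        (shear.tsum_eq fun p : G × G ↦ f p.1 * g p.2).symm
    _ = ∑' a, ∑' x, f (x + a) * g x :=
        ((Equiv.prodComm G G).tsum_eq _).symm.trans hfg.prod_symm.tsum_prod

lemma norm_tsum_sq_eq_norm_tsum_tsum_add_mul_conj {G 𝕜 : Type*} [AddGroup G] [RCLike 𝕜]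
    {f : G → 𝕜} (hf : Summable fun x ↦ ‖f x‖) :
    ‖∑' x, f x‖ ^ 2 = ‖∑' a, ∑' x, f (x + a) * conj (f x)‖ := by
  have hf' : Summable fun x ↦ ‖conj (f x)‖ := by simpa only [RCLike.norm_conj] using hf
  rw [← tsum_mul_tsum_eq_tsum_tsum_add hf hf', ← RCLike.conj_tsum, norm_mul, RCLike.norm_conj, sq]

end Correlation

section Zsqrtd

/-- The coordinates of an element of `ℤ√d`, used to split double sums over `ℤ[i]` into
one-dimensional ones. -/
def zsqrtdEquivProd (d : ℤ) : ℤ√d ≃ ℤ × ℤ where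
  toFun z := (z.re, z.im)
  invFun p := ⟨p.1, p.2⟩

variable {d : ℤ} {R : Type*} [NormedRing R] {f g : ℤ → R}

lemma summable_norm_re_mul_im (hf : Summable fun n ↦ ‖f n‖) (hg : Summable fun n ↦ ‖g n‖) :
    Summable fun z : ℤ√d ↦ ‖f z.re * g z.im‖ := by
  rw [← (zsqrtdEquivProd d).symm.summable_iff]
  exact hf.mul_norm hg

lemma tsum_re_mul_im [CompleteSpace R] (hf : Summable fun n ↦ ‖f n‖)
    (hg : Summable fun n ↦ ‖g n‖) :
    ∑' z : ℤ√d, f z.re * g z.im = (∑' n, f n) * ∑' n, g n := by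
  rw [tsum_mul_tsum_of_summable_norm hf hg]
  exact (zsqrtdEquivProd d).tsum_eq fun p ↦ f p.1 * g p.2

end Zsqrtd

section Theta

open Complex

/-- The term of the theta series with characteristics `s` (a shift of the summation variable) and
`t` (a frequency): the Gaussian `exp(-πax²)` times `exp(2πitx)`, at `x = n + s`. -/
def thetaCharTerm (a s t : ℂ) (n : ℤ) : ℂ :=
  cexp (-Real.pi * a * (n + s) ^ 2 + 2 * Real.pi * I * t * (n + s))

lemma thetaCharTerm_eq_mul_jacobiTheta₂_term (a s t : ℂ) (n : ℤ) :
    thetaCharTerm a s t n = cexp (-Real.pi * a * s ^ 2 + 2 * Real.pi * I * t * s) *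
      jacobiTheta₂_term n (t + I * a * s) (I * a) := by
  rw [thetaCharTerm, jacobiTheta₂_term, ← Complex.exp_add]
  congr 1
  linear_combination (-(Real.pi * a * n ^ 2) - 2 * Real.pi * a * n * s) * I_sq

lemma tsum_thetaCharTerm (a s t : ℂ) :
    ∑' n, thetaCharTerm a s t n = cexp (-Real.pi * a * s ^ 2 + 2 * Real.pi * I * t * s) *
      jacobiTheta₂ (t + I * a * s) (I * a) := by
  simp_rw [thetaCharTerm_eq_mul_jacobiTheta₂_term, tsum_mul_left, jacobiTheta₂]

lemma summable_norm_thetaCharTerm {a : ℂ} (ha : 0 < a.re) (s t : ℂ) :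
    Summable fun n ↦ ‖thetaCharTerm a s t n‖ := by
  simp_rw [thetaCharTerm_eq_mul_jacobiTheta₂_term]
  have h := (summable_jacobiTheta₂_term_iff (t + I * a * s) (I * a)).mpr (by simpa using ha)
  exact (h.mul_left _).norm

lemma tsum_thetaCharTerm_functional_equation {a : ℂ} (ha : 0 < a.re) (s t : ℂ) :
    ∑' n, thetaCharTerm a s t n = 1 / a ^ (1 / 2 : ℂ) * cexp (2 * Real.pi * I * (s * t)) *
      ∑' n, thetaCharTerm a⁻¹ (-t) s n := by
  have ha0 : a ≠ 0 := by rintro rfl; simp at ha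
  have h_arg : (t + I * a * s) / (I * a) = s + I * a⁻¹ * -t := by
    field_simp
    linear_combination t * I_sq
  have h_modulus : -1 / (I * a) = I * a⁻¹ := by
    field_simp
    linear_combination -I_sq
  have h_exp : -Real.pi * a * s ^ 2 + 2 * Real.pi * I * t * s +
        -Real.pi * I * (t + I * a * s) ^ 2 / (I * a) =
      2 * Real.pi * I * (s * t) +
        (-Real.pi * a⁻¹ * (-t) ^ 2 + 2 * Real.pi * I * s * -t) := by
    field_simp
    linear_combination (-(a ^ 2 * s ^ 2)) * I_sq
  rw [tsum_thetaCharTerm, tsum_thetaCharTerm, jacobiTheta₂_functional_equation, h_arg, h_modulus,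
    show -I * (I * a) = a by linear_combination -a * I_sq]
  have h_exp_mul := congrArg cexp h_exp
  simp only [Complex.exp_add] at h_exp_mul ⊢
  linear_combination (1 / a ^ (1 / 2 : ℂ) * jacobiTheta₂ (s + I * a⁻¹ * -t) (I * a⁻¹)) * h_exp_mul

end Theta

section GaussianSums

open Complex
open scoped ComplexConjugate

lemma cN_toComplex (z : GaussianInt) : cN z = gN z := by
  simp only [cN, gN, ← GaussianInt.intCast_re, ← GaussianInt.intCast_im]

lemma norm_e (t : ℝ) : ‖e t‖ = 1 := by
  rw [e, show 2 * Real.pi * I * t = ((2 * Real.pi * t : ℝ) : ℂ) * I by push_cast; ring,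
    norm_exp_ofReal_mul_I]

lemma conj_e (t : ℝ) : conj (e t) = e (-t) := by
  simp only [e, ← Complex.exp_conj, map_mul, conj_I, conj_ofReal, map_ofNat, ofReal_neg,
    mul_neg, neg_mul]

/-- The Gaussian `exp(-π a N(z))` twisted by the phase `e(Re P(z))`; the summand of `S(q₁,r₁,j)` has
a quadratic `P`, and Weyl differencing makes `P` linear. -/
def twistedGaussian (a : ℝ) (P : ℂ → ℂ) (z : ℂ) : ℂ :=
  (Real.exp (-Real.pi * a * cN z) : ℂ) * e (P z).re

lemma norm_twistedGaussian (a : ℝ) (P : ℂ → ℂ) (z : ℂ) :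
    ‖twistedGaussian a P z‖ = Real.exp (-Real.pi * a * cN z) := by
  rw [twistedGaussian, norm_mul, norm_e, mul_one, norm_real,
    Real.norm_of_nonneg (Real.exp_nonneg _)]

lemma twistedGaussian_add_mul_conj (a : ℝ) (c z w : ℂ) :
    twistedGaussian a (c * · ^ 2) (z + w) * conj (twistedGaussian a (c * · ^ 2) z) =
      Real.exp (-Real.pi * (a / 2) * cN w) *
        twistedGaussian (2 * a) (2 * c * w * ·) (z + w / 2) := by
  have h_phase : (c * (z + w) ^ 2).re = (c * z ^ 2).re + (2 * c * w * (z + w / 2)).re := by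
    rw [← add_re]
    congr 1
    ring
  have h_parallelogram : cN (z + w) + cN z = 2 * cN (z + w / 2) + cN w / 2 := by
    simp only [cN, add_re, add_im, div_ofNat_re, div_ofNat_im]
    ring
  have h_cast := congrArg (fun x : ℝ ↦ (x : ℂ)) h_parallelogram
  simp only [twistedGaussian, map_mul, conj_ofReal, conj_e, h_phase]
  simp only [e, ofReal_exp, ← Complex.exp_add]
  congr 1
  push_cast at h_cast ⊢
  linear_combination -Real.pi * a * h_cast

lemma twistedGaussian_linear_eq_mul (a : ℝ) (w z : ℂ) (q : GaussianInt) :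
    twistedGaussian a (w * ·) (q + z) =
      thetaCharTerm a z.re w.re q.re * thetaCharTerm a z.im (-w.im) q.im := by
  simp only [twistedGaussian, thetaCharTerm, e, cN, ofReal_exp, ← Complex.exp_add, add_re, add_im,
    mul_re, ← GaussianInt.intCast_re, ← GaussianInt.intCast_im]
  congr 1
  push_cast
  ring

lemma tsum_twistedGaussian_linear {a : ℝ} (ha : 0 < a) (w z : ℂ) :
    ∑' q : GaussianInt, twistedGaussian a (w * ·) (q + z) =
      (∑' n, thetaCharTerm a z.re w.re n) * ∑' n, thetaCharTerm a z.im (-w.im) n := by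
  simp_rw [twistedGaussian_linear_eq_mul]
  exact tsum_re_mul_im (summable_norm_thetaCharTerm ha _ _) (summable_norm_thetaCharTerm ha _ _)

lemma summable_exp_neg_cN {a : ℝ} (ha : 0 < a) (z : ℂ) :
    Summable fun q : GaussianInt ↦ Real.exp (-Real.pi * a * cN (q + z)) := by
  simp_rw [← norm_twistedGaussian a (0 * ·), twistedGaussian_linear_eq_mul]
  exact summable_norm_re_mul_im (summable_norm_thetaCharTerm ha _ _)
    (summable_norm_thetaCharTerm ha _ _)

lemma tsum_twistedGaussian_linear_poisson {a : ℝ} (ha : 0 < a) (w z : ℂ) :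
    ∑' q : GaussianInt, twistedGaussian a (w * ·) (q + z) = (a⁻¹ : ℝ) * e (z * w).re *
      ∑' β : GaussianInt, twistedGaussian a⁻¹ (conj z * ·) (β - conj w) := by
  have ha0 : (a : ℂ) ≠ 0 := ofReal_ne_zero.mpr ha.ne'
  have h_sqrt : 1 / (a : ℂ) ^ (1 / 2 : ℂ) * (1 / (a : ℂ) ^ (1 / 2 : ℂ)) = (a : ℂ)⁻¹ := by
    rw [one_div_mul_one_div, ← cpow_add _ _ ha0, add_halves, cpow_one, one_div]
  have h_phase : e (z * w).re =
      cexp (2 * Real.pi * I * (z.re * w.re)) * cexp (2 * Real.pi * I * (z.im * -w.im)) := by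
    rw [e, ← Complex.exp_add, mul_re]
    congr 1
    push_cast
    ring
  simp_rw [sub_eq_add_neg]
  rw [tsum_twistedGaussian_linear ha, tsum_twistedGaussian_linear (inv_pos.mpr ha),
    tsum_thetaCharTerm_functional_equation ha z.re w.re,
    tsum_thetaCharTerm_functional_equation ha z.im (-w.im), h_phase]
  simp only [neg_re, neg_im, conj_re, conj_im, ofReal_neg, ofReal_inv, neg_neg, ← h_sqrt]
  ring

lemma norm_tsum_twistedGaussian_linear_le {a : ℝ} (ha : 0 < a) (w z : ℂ) :
    ‖∑' q : GaussianInt, twistedGaussian a (w * ·) (q + z)‖ ≤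
      a⁻¹ * ∑' β : GaussianInt, Real.exp (-Real.pi * a⁻¹ * cN (β - conj w)) := by
  have ha' : 0 < a⁻¹ := inv_pos.mpr ha
  rw [tsum_twistedGaussian_linear_poisson ha, norm_mul, norm_mul, norm_e, mul_one, norm_real,
    Real.norm_of_nonneg ha'.le]
  gcongr
  refine tsum_of_norm_bounded ?_ fun β ↦ (norm_twistedGaussian _ _ _).le
  simpa only [sub_eq_add_neg] using (summable_exp_neg_cN ha' (-conj w)).hasSum

lemma tsum_exp_neg_cN_le {a : ℝ} (ha : 0 < a) (z : ℂ) :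
    ∑' q : GaussianInt, Real.exp (-Real.pi * a * cN (q + z)) ≤
      a⁻¹ * ∑' β : GaussianInt, Real.exp (-Real.pi * a⁻¹ * cN β) := by
  have h_untwisted (q : GaussianInt) : twistedGaussian a (0 * ·) (q + z) =
      (Real.exp (-Real.pi * a * cN (q + z)) : ℂ) := by
    simp [twistedGaussian, e]
  have h := norm_tsum_twistedGaussian_linear_le ha 0 z
  simp_rw [h_untwisted, ← ofReal_tsum, map_zero, sub_zero] at h
  exact (Real.le_norm_self _).trans ((norm_real _).symm.trans_le h)

lemma norm_tsum_twistedGaussian_add_mul_conj_le {a : ℝ} (ha : 0 < a) (c w : ℂ) :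
    ‖∑' q : GaussianInt, twistedGaussian a (c * · ^ 2) (q + w) *
        conj (twistedGaussian a (c * · ^ 2) q)‖ ≤
      Real.exp (-Real.pi * (a / 2) * cN w) * ((2 * a)⁻¹ *
        ∑' β : GaussianInt, Real.exp (-Real.pi * (2 * a)⁻¹ * cN (β - conj (2 * c * w)))) := by
  simp_rw [twistedGaussian_add_mul_conj]
  rw [tsum_mul_left, norm_mul, norm_real, Real.norm_of_nonneg (Real.exp_nonneg _)]
  gcongr
  exact norm_tsum_twistedGaussian_linear_le (by positivity) _ _

lemma summable_exp_neg_cN_mul_tsum {a b : ℝ} (ha : 0 < a) (hb : 0 < b) (u : GaussianInt → ℂ) :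
    Summable fun α : GaussianInt ↦ Real.exp (-Real.pi * a * cN α) *
      ∑' β : GaussianInt, Real.exp (-Real.pi * b * cN (β - u α)) := by
  have h_gaussian : Summable fun α : GaussianInt ↦ Real.exp (-Real.pi * a * cN α) := by
    simpa only [add_zero] using summable_exp_neg_cN ha 0
  refine .of_nonneg_of_le (fun α ↦ by positivity) (fun α ↦ ?_) (h_gaussian.mul_right
    (b⁻¹ * ∑' β : GaussianInt, Real.exp (-Real.pi * b⁻¹ * cN β)))
  gcongr
  simpa only [sub_eq_add_neg] using tsum_exp_neg_cN_le hb (-u α)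

lemma norm_tsum_twistedGaussian_quadratic_sq_le {a : ℝ} (ha : 0 < a) (c : ℂ) :
    ‖∑' q : GaussianInt, twistedGaussian a (c * · ^ 2) q‖ ^ 2 ≤
      (2 * a)⁻¹ * ∑' α : GaussianInt, Real.exp (-Real.pi * (a / 2) * cN α) *
        ∑' β : GaussianInt, Real.exp (-Real.pi * (2 * a)⁻¹ * cN (β - conj (2 * c * α))) := by
  have h_summable : Summable fun q : GaussianInt ↦ ‖twistedGaussian a (c * · ^ 2) q‖ := by
    simpa only [norm_twistedGaussian, add_zero] using summable_exp_neg_cN ha 0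
  rw [norm_tsum_sq_eq_norm_tsum_tsum_add_mul_conj h_summable]
  refine tsum_of_norm_bounded ((summable_exp_neg_cN_mul_tsum (half_pos ha)
    (by positivity) _).hasSum.mul_left _) fun α ↦ ?_
  rw [mul_left_comm]
  simpa only [GaussianInt.toComplex_add] using norm_tsum_twistedGaussian_add_mul_conj_le ha c α

end GaussianSums

theorem weyl_poisson_square_general (Q0 : ℝ) (hQ0 : 0 < Q0) (c : ℂ) :
    ‖∑' q : GaussianInt, ((Real.exp (-Real.pi * gN q / (2 * Q0)) : ℝ) : ℂ) *
        e ((c * (q : ℂ) ^ 2).re)‖ ^ 2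
      ≤ Q0 * ∑' α : GaussianInt, Real.exp (-Real.pi * gN α / (4 * Q0)) *
          ∑' β : GaussianInt,
            Real.exp (-Real.pi * Q0 * cN ((β : ℂ) - starRingEnd ℂ (2 * c * α))) := by
  have h := norm_tsum_twistedGaussian_quadratic_sq_le (a := (2 * Q0)⁻¹) (by positivity) c
  have h_exp (x d : ℝ) : -Real.pi * d⁻¹ * x = -Real.pi * x / d := by ring
  have h_half : (2 * Q0)⁻¹ / 2 = (4 * Q0)⁻¹ := by ring
  have h_double : (2 * (2 * Q0)⁻¹)⁻¹ = Q0 := by field_simp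
  simpa only [twistedGaussian, cN_toComplex, h_half, h_double, h_exp] using h

/-- **Weyl differencing and Poisson summation for the quadratic sum** (inequality (24) of
the paper). For `Q₀ > 0`, `q₁ ≠ 0` and `r₁, j ∈ ℤ[i]`,
`|S(q₁,r₁,j)|² ≤ Q₀ ∑_{α ∈ ℤ[i]} exp(-π N(α)/(4Q₀))
   ∑_{β ∈ ℤ[i]} exp(-π Q₀ N(β - conj(2jα r₁/q₁²)))`. -/
theorem weyl_poisson_square (Q0 : ℝ) (hQ0 : 0 < Q0)
    (q1 : GaussianInt) (hq1 : q1 ≠ 0) (r1 j : GaussianInt) :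
    ‖Ssum Q0 q1 r1 j‖ ^ 2
      ≤ Q0 * ∑' α : GaussianInt, Real.exp (-Real.pi * gN α / (4 * Q0)) *
          ∑' β : GaussianInt,
            Real.exp (-Real.pi * Q0 *
              cN ((β : ℂ) - (starRingEnd ℂ) (2 * (j : ℂ) * (α : ℂ) * (r1 : ℂ) / (q1 : ℂ) ^ 2))) := by
  have h_phase (q : GaussianInt) : (j : ℂ) * r1 * (q : ℂ) ^ 2 / (q1 : ℂ) ^ 2 =
      j * r1 / (q1 : ℂ) ^ 2 * (q : ℂ) ^ 2 := by ring
  have h_freq (α : GaussianInt) : 2 * (j : ℂ) * α * r1 / (q1 : ℂ) ^ 2 =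
      2 * (j * r1 / (q1 : ℂ) ^ 2) * α := by ring
  simpa only [Ssum, h_phase, h_freq] using
    weyl_poisson_square_general Q0 hQ0 (j * r1 / (q1 : ℂ) ^ 2)
end
end
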